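/- arXiv:1512.01758 — 4 statements merged into one kernel-verified Lean document; each statement's English description precedes it below -/
import Mathlib

section
/- Let V : Ω × ℝ^{dT} → ℝ ∪ {−∞} be a normal integrand market model satisfying the no-arbitrage condition NA, and let f ∈ L^0(𝓕;ℝ) be a random variable. Then there exists a finite 𝓕-measurable random variable K : Ω → ℝ such that every strategy ϑ ∈ 𝒜 with V(·,ϑ(·)) ≥ f a.s. satisfies |ϑ| ≤ K almost surely. -/
open MeasureTheory Filter Topology
open scoped ENNReal

noncomputable section

/-- A strategy `ϑ` is adapted to the filtration `ℱ`. -/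
def AdaptedStrat {Ω : Type*} {T d : ℕ} (ℱ : Fin T → MeasurableSpace Ω)
    (ϑ : Ω → Fin T → Fin d → ℝ) : Prop :=
  ∀ t : Fin T, Measurable[ℱ t] fun ω => ϑ ω t

/-- The hypographical correspondence of `V` is closed valued and measurable. -/
def HypoClosedMeas {Ω : Type*} {mΩ : MeasurableSpace Ω} {T d : ℕ}
    (V : Ω → (Fin T → Fin d → ℝ) → EReal) : Prop :=
  (∀ ω, IsClosed {xb : (Fin T → Fin d → ℝ) × ℝ | (xb.2 : EReal) ≤ V ω xb.1}) ∧
  (∀ (c : (Fin T → Fin d → ℝ) × ℝ) (s : ℝ),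
    MeasurableSet {ω | (Metric.ball c s ∩
      {xb : (Fin T → Fin d → ℝ) × ℝ | (xb.2 : EReal) ≤ V ω xb.1}).Nonempty})

/-- The recession market model
`V^∞(ω,z) = lim_{λ→∞} sup { (1/δ)·V(ω,δx) : δ > λ, |x−z| < 1/λ }`; since the inner
supremum is antitone in `λ`, the limit equals the infimum over `λ > 0`. -/
def recessionModel {Ω : Type*} {T d : ℕ} (V : Ω → (Fin T → Fin d → ℝ) → EReal)
    (ω : Ω) (z : Fin T → Fin d → ℝ) : EReal :=
  ⨅ l : {l : ℝ // 0 < l}, ⨆ δ : {δ : ℝ // l.1 < δ},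
    ⨆ x : {x : Fin T → Fin d → ℝ // ‖x - z‖ < 1 / l.1},
      (((δ.1)⁻¹ : ℝ) : EReal) * V ω (δ.1 • x.1)

/-- The no-arbitrage condition NA: the only adapted strategy `ϑ` with
`V^∞(·,ϑ(·)) ≥ 0` a.s. is `ϑ = 0`. -/
def NAcond {Ω : Type*} {mΩ : MeasurableSpace Ω} {T d : ℕ} (P : Measure Ω)
    (ℱ : Fin T → MeasurableSpace Ω) (V : Ω → (Fin T → Fin d → ℝ) → EReal) : Prop :=
  ∀ ϑ, AdaptedStrat ℱ ϑ → (∀ᵐ ω ∂P, 0 ≤ recessionModel V ω (ϑ ω)) →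
    ∀ᵐ ω ∂P, ϑ ω = 0

/-- Evaluating a sequence of measurable functions at a measurable random index is measurable. -/
theorem measurable_randomIndex {Ω β : Type*} {m : MeasurableSpace Ω} [MeasurableSpace β]
    {u : ℕ → Ω → β} (hu : ∀ n, Measurable (u n)) {N : Ω → ℕ} (hN : Measurable N) :
    Measurable fun ω => u (N ω) ω :=
  (measurable_from_prod_countable_left (f := fun p : Ω × ℕ => u p.2 p.1) fun n => hu n).comp
    (measurable_id.prodMk hN)

/-- The limit superior of a bounded real sequence is a cluster point of the sequence. -/
theorem exists_abs_sub_limsup_lt {u : ℕ → ℝ} {C : ℝ} (hC : ∀ n, |u n| ≤ C) {ε : ℝ} (hε : 0 < ε)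
    (k : ℕ) : ∃ n, k ≤ n ∧ |u n - limsup u atTop| < ε := by
  have hle : IsBoundedUnder (· ≤ ·) atTop u :=
    isBoundedUnder_of ⟨C, fun n => (abs_le.1 (hC n)).2⟩
  have hge : IsBoundedUnder (· ≥ ·) atTop u :=
    isBoundedUnder_of ⟨-C, fun n => (abs_le.1 (hC n)).1⟩
  have hfreq : ∃ᶠ n in atTop, limsup u atTop - ε < u n :=
    frequently_lt_of_lt_limsup hge.isCoboundedUnder_le (by linarith)
  have hev : ∀ᶠ n in atTop, u n < limsup u atTop + ε :=
    eventually_lt_of_limsup_lt (by linarith) hle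
  obtain ⟨n, ⟨hn₁, hn₂⟩, hkn⟩ :=
    ((hfreq.and_eventually hev).and_eventually (eventually_ge_atTop k)).exists
  exact ⟨n, hkn, abs_lt.2 ⟨by linarith, by linarith⟩⟩

/-- Measurable Bolzano–Weierstrass: a sequence of real random variables has a measurable random
subsequence converging to a measurable limit wherever the sequence is bounded. -/
theorem exists_measurable_subseq_real {Ω : Type*} {m : MeasurableSpace Ω} {u : ℕ → Ω → ℝ}
    (hu : ∀ n, Measurable (u n)) :
    ∃ (σ : ℕ → Ω → ℕ) (z : Ω → ℝ), (∀ k, Measurable (σ k)) ∧ Measurable z ∧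
      (∀ ω, Tendsto (fun k => σ k ω) atTop atTop) ∧
      ∀ ω, (∃ C, ∀ n, |u n ω| ≤ C) → Tendsto (fun k => u (σ k ω) ω) atTop (𝓝 (z ω)) := by
  classical
  let z : Ω → ℝ := fun ω => limsup (fun n => u n ω) atTop
  have hz : Measurable z := Measurable.limsup hu
  let q : ℕ → Ω → ℕ → Prop := fun k ω n => k ≤ n ∧ |u n ω - z ω| < 1 / ((k : ℝ) + 1)
  let p : ℕ → Ω → ℕ → Prop := fun k ω n => k ≤ n ∧ (q k ω n ∨ ¬ ∃ j, q k ω j)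
  have hq : ∀ k n, MeasurableSet {ω | q k ω n} := fun k n =>
    (MeasurableSet.const _).inter
      (measurableSet_lt (continuous_abs.measurable.comp ((hu n).sub hz)) measurable_const)
  have hp : ∀ k n, MeasurableSet {ω | p k ω n} := fun k n => by
    have hex : MeasurableSet {ω | ∃ j, q k ω j} := by
      rw [Set.ofPred_exists]
      exact MeasurableSet.iUnion (hq k)
    exact (MeasurableSet.const _).inter ((hq k n).union hex.compl)
  have hpex : ∀ k ω, ∃ n, p k ω n := fun k ω => by
    by_cases h : ∃ j, q k ω j
    · obtain ⟨j, hj⟩ := h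
      exact ⟨j, hj.1, Or.inl hj⟩
    · exact ⟨k, le_rfl, Or.inr h⟩
  refine ⟨fun k ω => Nat.find (hpex k ω), z, fun k => measurable_find (hpex k) (hp k), hz,
    fun ω => tendsto_atTop_mono (fun k => (Nat.find_spec (hpex k ω)).1) tendsto_id, ?_⟩
  rintro ω ⟨C, hC⟩
  rw [tendsto_iff_dist_tendsto_zero]
  refine squeeze_zero (fun _ => dist_nonneg) (fun k => ?_)
    tendsto_one_div_add_atTop_nhds_zero_nat
  have hex : ∃ j, q k ω j := exists_abs_sub_limsup_lt hC Nat.one_div_pos_of_nat k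
  rcases (Nat.find_spec (hpex k ω)).2 with h | h
  · exact h.2.le
  · exact absurd hex h

/-- Measurable Bolzano–Weierstrass along a filtration: finitely many real sequences have a common
random subsequence along which they converge wherever they are bounded, and each limit inherits
the measurability of its own sequence. -/
theorem exists_adapted_subseq_limit {Ω ι : Type*} [LinearOrder ι] {m : ι → MeasurableSpace Ω}
    (hm : Monotone m) {u : ι → ℕ → Ω → ℝ} (hu : ∀ i n, Measurable[m i] (u i n)) (s : Finset ι) :
    ∃ (σ : ℕ → Ω → ℕ) (z : ι → Ω → ℝ),
      (∀ 𝒢 : MeasurableSpace Ω, (∀ i ∈ s, m i ≤ 𝒢) → ∀ k, Measurable[𝒢] (σ k)) ∧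
      (∀ i, Measurable[m i] (z i)) ∧ (∀ ω, Tendsto (fun k => σ k ω) atTop atTop) ∧
      ∀ ω, (∀ i ∈ s, ∃ C, ∀ n, |u i n ω| ≤ C) →
        ∀ i ∈ s, Tendsto (fun k => u i (σ k ω) ω) atTop (𝓝 (z i ω)) := by
  induction s using Finset.induction_on_max with
  | empty =>
    exact ⟨fun k _ => k, fun _ _ => 0, fun _ _ _ => measurable_const, fun _ => measurable_const,
      fun _ => tendsto_id, by simp⟩
  | insert a s ha ih =>
    obtain ⟨σ, z, hσ, hz, hσtop, hlim⟩ := ih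
    have hσa : ∀ k, Measurable[m a] (σ k) := hσ (m a) fun i hi => hm (ha i hi).le
    obtain ⟨τ, y, hτ, hy, hτtop, hylim⟩ := exists_measurable_subseq_real (m := m a)
      (u := fun k ω => u a (σ k ω) ω) fun k => measurable_randomIndex (hu a) (hσa k)
    have has : a ∉ s := fun h => lt_irrefl a (ha a h)
    refine ⟨fun k ω => σ (τ k ω) ω, Function.update z a y, ?_, ?_,
      fun ω => (hσtop ω).comp (hτtop ω), ?_⟩
    · intro 𝒢 h𝒢 k
      have haG := h𝒢 a (Finset.mem_insert_self a s)
      exact (measurable_randomIndex hσa (hτ k)).mono haG le_rfl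
    · intro i
      by_cases hi : i = a
      · subst hi
        simpa using hy
      · simpa [hi] using hz i
    · intro ω hb i hi
      rcases Finset.mem_insert.1 hi with rfl | his
      · obtain ⟨C, hC⟩ := hb i hi
        simpa using hylim ω ⟨C, fun n => hC _⟩
      · have hne : i ≠ a := fun h => has (h ▸ his)
        rw [Function.update_of_ne hne]
        exact (hlim ω (fun j hj => hb j (Finset.mem_insert_of_mem hj)) i his).comp (hτtop ω)

/-- In a family closed under gluing along measurable random indices, some member exceeds the level
`c` on an almost surely largest set. -/
theorem exists_maximal_superlevel {Ω E : Type*} {mΩ : MeasurableSpace Ω} (P : Measure Ω)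
    [IsFiniteMeasure P] {m : MeasurableSpace Ω} (hm : m ≤ mΩ) {S : Set (Ω → E)}
    (hS : S.Nonempty) {ρ : E → ℝ} (hρ : ∀ X ∈ S, Measurable[m] fun ω => ρ (X ω))
    (hglue : ∀ X : ℕ → Ω → E, (∀ n, X n ∈ S) → ∀ N : Ω → ℕ, Measurable[m] N →
      (fun ω => X (N ω) ω) ∈ S) (c : ℝ) :
    ∃ Y ∈ S, ∀ X ∈ S, ∀ᵐ ω ∂P, c < ρ (X ω) → c < ρ (Y ω) := by
  classical
  have hset : ∀ X ∈ S, MeasurableSet[m] {ω | c < ρ (X ω)} := fun X hX =>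
    measurableSet_lt measurable_const (hρ X hX)
  let M : Set ℝ≥0∞ := (fun X : Ω → E => P {ω | c < ρ (X ω)}) '' S
  obtain ⟨v, -, hv, hvM⟩ := exists_seq_tendsto_sSup (S := M) (hS.image _) (OrderTop.bddAbove _)
  choose X hXS hXv using hvM
  let p : Ω → ℕ → Prop := fun ω n => c < ρ (X n ω) ∨ ¬ ∃ j, c < ρ (X j ω)
  have hpex : ∀ ω, ∃ n, p ω n := fun ω => by
    by_cases h : ∃ j, c < ρ (X j ω)
    · exact h.imp fun j hj => Or.inl hj
    · exact ⟨0, Or.inr h⟩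
  have hN : Measurable[m] fun ω => Nat.find (hpex ω) := by
    refine @measurable_find Ω m p _ hpex fun k => ?_
    have hex : MeasurableSet[m] {ω | ∃ j, c < ρ (X j ω)} := by
      rw [Set.ofPred_exists]
      exact MeasurableSet.iUnion fun j => hset _ (hXS j)
    exact (hset _ (hXS k)).union hex.compl
  let Y : Ω → E := fun ω => X (Nat.find (hpex ω)) ω
  have hY : Y ∈ S := hglue X hXS _ hN
  have hXY : ∀ n, {ω | c < ρ (X n ω)} ⊆ {ω | c < ρ (Y ω)} := fun n ω hω =>
    (Nat.find_spec (hpex ω)).resolve_right (not_not_intro ⟨n, hω⟩)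
  have hsup : sSup M ≤ P {ω | c < ρ (Y ω)} :=
    le_of_tendsto' hv fun n => hXv n ▸ measure_mono (hXY n)
  refine ⟨Y, hY, fun Z hZ => ?_⟩
  let W : ℕ → Ω → E := fun n => if n = 0 then Z else Y
  let N : Ω → ℕ := fun ω => if c < ρ (Z ω) then 0 else 1
  have hW : (fun ω => W (N ω) ω) ∈ S :=
    hglue W (fun n => by by_cases h : n = 0 <;> simp [W, h, hZ, hY]) N
      (Measurable.ite (hset Z hZ) measurable_const measurable_const)
  have hunion : {ω | c < ρ (W (N ω) ω)} = {ω | c < ρ (Y ω)} ∪ {ω | c < ρ (Z ω)} := by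
    ext ω
    by_cases h : c < ρ (Z ω) <;> simp [W, N, h]
  have hle : P ({ω | c < ρ (Y ω)} ∪ {ω | c < ρ (Z ω)}) ≤ P {ω | c < ρ (Y ω)} :=
    hunion ▸ (le_sSup (Set.mem_image_of_mem _ hW)).trans hsup
  have hae := ae_eq_of_subset_of_measure_ge (Set.subset_union_left) hle
    (hm _ (hset Y hY)).nullMeasurableSet (measure_ne_top P _)
  filter_upwards [hae.mem_iff] with ω hω hZω
  exact hω.2 (Or.inr hZω)

/-- In a family closed under gluing along measurable random indices, a functional is either
bounded by one finite random variable or diverges along a sequence on a non-null set. -/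
theorem exists_bound_or_diverging {Ω E : Type*} {mΩ : MeasurableSpace Ω} (P : Measure Ω)
    [IsFiniteMeasure P] {m : MeasurableSpace Ω} (hm : m ≤ mΩ) {S : Set (Ω → E)}
    {ρ : E → ℝ} (hρ : ∀ X ∈ S, Measurable[m] fun ω => ρ (X ω))
    (hglue : ∀ X : ℕ → Ω → E, (∀ n, X n ∈ S) → ∀ N : Ω → ℕ, Measurable[m] N →
      (fun ω => X (N ω) ω) ∈ S) :
    (∃ R : Ω → ℝ, Measurable[m] R ∧ ∀ X ∈ S, ∀ᵐ ω ∂P, ρ (X ω) ≤ R ω) ∨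
      ∃ (B : Set Ω) (X : ℕ → Ω → E), MeasurableSet[m] B ∧ P B ≠ 0 ∧ (∀ n, X n ∈ S) ∧
        ∀ ω ∈ B, ∀ n : ℕ, (n : ℝ) + 1 < ρ (X n ω) := by
  classical
  rcases S.eq_empty_or_nonempty with rfl | hS
  · exact Or.inl ⟨fun _ => 0, measurable_const, by simp⟩
  choose Y hYS hYmax using fun n : ℕ => exists_maximal_superlevel P hm hS hρ hglue ((n : ℝ) + 1)
  have hset : ∀ n : ℕ, MeasurableSet[m] {ω | (n : ℝ) + 1 < ρ (Y n ω)} := fun n =>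
    measurableSet_lt measurable_const (hρ _ (hYS n))
  let B : Set Ω := ⋂ n : ℕ, {ω | (n : ℝ) + 1 < ρ (Y n ω)}
  have hB : MeasurableSet[m] B := MeasurableSet.iInter hset
  by_cases hPB : P B = 0
  · left
    have hpex : ∀ ω, ∃ n : ℕ, ω ∈ B ∨ ¬ (n : ℝ) + 1 < ρ (Y n ω) := fun ω => by
      by_cases h : ω ∈ B
      · exact ⟨0, Or.inl h⟩
      · simp only [B, Set.mem_iInter, not_forall] at h
        exact h.imp fun n hn => Or.inr hn
    let N : Ω → ℕ := fun ω => Nat.find (hpex ω)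
    have hN : Measurable[m] N :=
      @measurable_find Ω m _ _ hpex fun n => hB.union (hset n).compl
    refine ⟨fun ω => (N ω : ℝ) + 1,
      ((measurable_from_top (f := fun n : ℕ => (n : ℝ) + 1)).comp hN), fun X hX => ?_⟩
    have hall : ∀ᵐ ω ∂P, ∀ n : ℕ, (n : ℝ) + 1 < ρ (X ω) → (n : ℝ) + 1 < ρ (Y n ω) :=
      ae_all_iff.2 fun n => hYmax n X hX
    filter_upwards [hall, measure_eq_zero_iff_ae_notMem.1 hPB] with ω hω hωB
    by_contra! hlt
    exact (Nat.find_spec (hpex ω)).resolve_left hωB (hω (N ω) hlt)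
  · exact Or.inr ⟨B, Y, hB, hPB, hYS, fun ω hω n => Set.mem_iInter.1 hω n⟩

/-- If `V` stays bounded below along `δ k • x k` with `δ k → ∞` and `x k → z`, then the recession
model is nonnegative at `z`. -/
theorem recessionModel_nonneg_of_tendsto {Ω : Type*} {T d : ℕ}
    {V : Ω → (Fin T → Fin d → ℝ) → EReal} {ω : Ω} {z : Fin T → Fin d → ℝ} {δ : ℕ → ℝ}
    {x : ℕ → Fin T → Fin d → ℝ} {c : ℝ} (hδ : Tendsto δ atTop atTop)
    (hx : Tendsto x atTop (𝓝 z)) (hV : ∀ k, (c : EReal) ≤ V ω (δ k • x k)) :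
    0 ≤ recessionModel V ω z := by
  refine le_iInf fun l => ?_
  have hlim : Tendsto (fun k => (((δ k)⁻¹ * c : ℝ) : EReal)) atTop (𝓝 0) := by
    have h := (tendsto_inv_atTop_zero.comp hδ).mul_const c
    rw [zero_mul] at h
    exact (continuous_coe_real_ereal.tendsto 0).comp h
  refine le_of_tendsto hlim ?_
  filter_upwards [hδ.eventually_gt_atTop l.1,
    Metric.tendsto_nhds.1 hx _ (one_div_pos.2 l.2)] with k hk hxk
  rw [dist_eq_norm] at hxk
  have hpos : 0 ≤ (δ k)⁻¹ := inv_nonneg.2 (l.2.trans hk).le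
  calc (((δ k)⁻¹ * c : ℝ) : EReal) = ((δ k)⁻¹ : ℝ) * (c : EReal) := EReal.coe_mul _ _
    _ ≤ ((δ k)⁻¹ : ℝ) * V ω (δ k • x k) :=
        mul_le_mul_of_nonneg_left (hV k) (EReal.coe_nonneg.2 hpos)
    _ ≤ ⨆ y : {y : Fin T → Fin d → ℝ // ‖y - z‖ < 1 / l.1},
          ((δ k)⁻¹ : ℝ) * V ω (δ k • y.1) :=
        le_iSup (fun y : {y : Fin T → Fin d → ℝ // ‖y - z‖ < 1 / l.1} =>
          (((δ k)⁻¹ : ℝ) : EReal) * V ω (δ k • y.1)) ⟨x k, hxk⟩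
    _ ≤ _ := le_iSup (fun r : {r : ℝ // l.1 < r} =>
          ⨆ y : {y : Fin T → Fin d → ℝ // ‖y - z‖ < 1 / l.1},
            ((r.1⁻¹ : ℝ) : EReal) * V ω (r.1 • y.1)) ⟨δ k, hk⟩

/-- The positions of a strategy strictly before time `t`, the later ones being set to zero. -/
def pastPart {T d : ℕ} (t : ℕ) (x : Fin T → Fin d → ℝ) : Fin T → Fin d → ℝ :=
  fun s => if (s : ℕ) < t then x s else 0

theorem norm_apply_le_norm_pastPart {T d : ℕ} {t : ℕ} (x : Fin T → Fin d → ℝ) {s : Fin T}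
    (hs : (s : ℕ) < t) : ‖x s‖ ≤ ‖pastPart t x‖ := by
  simpa [pastPart, hs] using norm_le_pi_norm (pastPart t x) s

theorem pastPart_zero {T d : ℕ} (x : Fin T → Fin d → ℝ) : pastPart 0 x = 0 := by
  ext s
  simp [pastPart]

theorem pastPart_eq_self {T d : ℕ} (x : Fin T → Fin d → ℝ) : pastPart T x = x := by
  ext s
  simp [pastPart]

theorem norm_pastPart_succ_le {T d : ℕ} (t : Fin T) (x : Fin T → Fin d → ℝ) :
    ‖pastPart (t + 1) x‖ ≤ ‖pastPart t x‖ + ‖x t‖ := by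
  refine (pi_norm_le_iff_of_nonneg (by positivity)).2 fun s => ?_
  rcases lt_trichotomy (s : ℕ) t with hs | hs | hs
  · have := norm_apply_le_norm_pastPart x hs
    simp only [pastPart, Nat.lt_succ_of_lt hs, if_true]
    linarith [norm_nonneg (x t)]
  · obtain rfl : s = t := Fin.ext hs
    simp [pastPart]
  · simp only [pastPart, not_lt.2 (Nat.succ_le_of_lt hs), if_false, norm_zero]
    positivity

/-- The strategies superhedging `f` when all information up to time `t` is revealed at the
start. -/
def superhedges {Ω : Type*} {mΩ : MeasurableSpace Ω} {T d : ℕ} (P : Measure Ω)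
    (G : ℕ → MeasurableSpace Ω) (V : Ω → (Fin T → Fin d → ℝ) → EReal) (f : Ω → ℝ) (t : ℕ) :
    Set (Ω → Fin T → Fin d → ℝ) :=
  {ϑ | AdaptedStrat (fun s : Fin T => G (max t s)) ϑ ∧ ∀ᵐ ω ∂P, (f ω : EReal) ≤ V ω (ϑ ω)}

/-- The size of the position at time `t` relative to the earlier positions. -/
def relativeSize {T d : ℕ} (t : Fin T) (x : Fin T → Fin d → ℝ) : ℝ :=
  ‖x t‖ / (1 + ‖pastPart t x‖)

theorem measurable_relativeSize {Ω : Type*} {T d : ℕ} {G : ℕ → MeasurableSpace Ω}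
    (hG : Monotone G) (t : Fin T) {ϑ : Ω → Fin T → Fin d → ℝ} (hϑ : AdaptedStrat (fun s : Fin T => G (max t s)) ϑ) :
    Measurable[G t] fun ω => relativeSize t (ϑ ω) := by
  have hle : ∀ s : Fin T, (s : ℕ) ≤ t → Measurable[G t] fun ω => ϑ ω s := fun s hs =>
    (hϑ s).mono (hG (max_le le_rfl hs)) le_rfl
  have hpast : Measurable[G t] fun ω => pastPart t (ϑ ω) := by
    refine @measurable_pi_lambda _ _ _ (G t) _ _ fun s => ?_
    by_cases hs : (s : ℕ) < t
    · simpa [pastPart, hs] using hle s hs.le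
    · simp [pastPart, hs]
  exact (measurable_norm.comp (hle t le_rfl)).div
    (measurable_const.add (measurable_norm.comp hpast))

theorem superhedges_glue {Ω : Type*} {mΩ : MeasurableSpace Ω} {T d : ℕ} {P : Measure Ω}
    {G : ℕ → MeasurableSpace Ω} (hG : Monotone G) {V : Ω → (Fin T → Fin d → ℝ) → EReal}
    {f : Ω → ℝ} {t : ℕ} {X : ℕ → Ω → Fin T → Fin d → ℝ} (hX : ∀ n, X n ∈ superhedges P G V f t)
    {N : Ω → ℕ} (hN : Measurable[G t] N) : (fun ω => X (N ω) ω) ∈ superhedges P G V f t := by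
  refine ⟨fun s => ?_, ?_⟩
  · exact measurable_randomIndex (m := G (max t s)) (u := fun n ω => X n ω s)
      (fun n => (hX n).1 s) (hN.mono (hG (le_max_left _ _)) le_rfl)
  · filter_upwards [ae_all_iff.2 fun n => (hX n).2] with ω hω
    exact hω _

theorem norm_smul_le_of_relativeSize {T d : ℕ} (t : Fin T) {x : Fin T → Fin d → ℝ} {K a : ℝ}
    (ha : 1 ≤ a) (hx : a < relativeSize t x) (hK : ‖x‖ ≤ K * (1 + ‖pastPart (t + 1) x‖)) :
    ‖‖x t‖⁻¹ • x‖ ≤ |K| * 2 := by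
  have hp : 0 < 1 + ‖pastPart t x‖ := by positivity
  have hxt : a * (1 + ‖pastPart t x‖) < ‖x t‖ := (lt_div_iff₀ hp).1 hx
  have hpos : 0 < ‖x t‖ := lt_of_le_of_lt (by positivity) hxt
  have hsucc := norm_pastPart_succ_le t x
  rw [norm_smul, norm_inv, norm_norm, inv_mul_le_iff₀ hpos]
  have h₁ : 1 + ‖pastPart (t + 1) x‖ ≤ 2 * ‖x t‖ := by nlinarith
  calc ‖x‖ ≤ K * (1 + ‖pastPart (t + 1) x‖) := hK
    _ ≤ |K| * (1 + ‖pastPart (t + 1) x‖) := by gcongr; exact le_abs_self K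
    _ ≤ |K| * (2 * ‖x t‖) := by gcongr
    _ = ‖x t‖ * (|K| * 2) := by ring

theorem norm_smul_apply_le_of_relativeSize {T d : ℕ} (t : Fin T) {x : Fin T → Fin d → ℝ} {a : ℝ}
    (ha : 0 < a) (hx : a < relativeSize t x) {s : Fin T} (hs : s < t) :
    ‖(‖x t‖⁻¹ • x) s‖ ≤ 1 / a := by
  have hp : 0 < 1 + ‖pastPart t x‖ := by positivity
  have hxt : a * (1 + ‖pastPart t x‖) < ‖x t‖ := (lt_div_iff₀ hp).1 hx
  have hpos : 0 < ‖x t‖ := lt_of_le_of_lt (by positivity) hxt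
  have hsle := norm_apply_le_norm_pastPart x (t := t) hs
  rw [Pi.smul_apply, norm_smul, norm_inv, norm_norm, inv_mul_le_iff₀ hpos, mul_one_div,
    le_div_iff₀ ha]
  nlinarith

theorem norm_normalized_apply {T d : ℕ} (t : Fin T) {x : Fin T → Fin d → ℝ} (hx : x t ≠ 0) :
    ‖(‖x t‖⁻¹ • x) t‖ = 1 := by
  rw [Pi.smul_apply, norm_smul, norm_inv, norm_norm, inv_mul_cancel₀ (norm_ne_zero_iff.2 hx)]

theorem lt_norm_of_lt_relativeSize {T d : ℕ} (t : Fin T) {x : Fin T → Fin d → ℝ} {a : ℝ}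
    (hx : a < relativeSize t x) : a < ‖x t‖ :=
  hx.trans_le (div_le_self (norm_nonneg _) (by linarith [norm_nonneg (pastPart t x)]))

/-- Under no-arbitrage, superhedging strategies cannot diverge at time `t` relative to their past
on a non-null set while their future is controlled. -/
theorem measure_eq_zero_of_relativeSize_diverging {Ω : Type*} {mΩ : MeasurableSpace Ω}
    {P : Measure Ω} {T d : ℕ} {G : ℕ → MeasurableSpace Ω} (hG : Monotone G)
    {V : Ω → (Fin T → Fin d → ℝ) → EReal} (hV0 : ∀ᵐ ω ∂P, V ω 0 = 0)
    (hNA : NAcond P (fun s : Fin T => G s) V) {f : Ω → ℝ} (t : Fin T) {K : Ω → ℝ}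
    {X : ℕ → Ω → Fin T → Fin d → ℝ} (hX : ∀ n, X n ∈ superhedges P G V f t)
    (hK : ∀ n, ∀ᵐ ω ∂P, ‖X n ω‖ ≤ K ω * (1 + ‖pastPart (t + 1) (X n ω)‖)) {B : Set Ω}
    (hB : MeasurableSet[G t] B)
    (hdiv : ∀ ω ∈ B, ∀ n : ℕ, (n : ℝ) + 1 < relativeSize t (X n ω)) : P B = 0 := by
  classical
  let m : Fin T ×ₗ Fin d → MeasurableSpace Ω := fun i => G (max t (ofLex i).1)
  have hm : Monotone m := fun i j hij =>
    hG (max_le_max_left _ (Fin.le_def.1 (Prod.Lex.monotone_fst _ _ hij)))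
  let u : ℕ → Ω → Fin T → Fin d → ℝ := fun n ω => ‖X n ω t‖⁻¹ • X n ω
  have hu : ∀ (i : Fin T ×ₗ Fin d) n,
      Measurable[m i] fun ω => u n ω (ofLex i).1 (ofLex i).2 := fun i n => by
    have hXt : Measurable[m i] fun ω => X n ω t :=
      ((hX n).1 t).mono (hG (by simp)) le_rfl
    exact (measurable_norm.comp hXt).inv.mul
      ((measurable_pi_apply (ofLex i).2).comp ((hX n).1 (ofLex i).1))
  obtain ⟨σ, z, -, hz, hσ, hlim⟩ := exists_adapted_subseq_limit hm
    (u := fun i n ω => u n ω (ofLex i).1 (ofLex i).2) hu Finset.univ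
  let ϑ : Ω → Fin T → Fin d → ℝ := fun ω s i => if ω ∈ B ∧ t ≤ s then z (toLex (s, i)) ω else 0
  have hϑ : AdaptedStrat (fun s : Fin T => G s) ϑ := fun s => by
    refine @measurable_pi_lambda _ _ _ (G s) _ _ fun i => ?_
    by_cases hs : t ≤ s
    · have hzs : Measurable[G s] (z (toLex (s, i))) :=
        (hz (toLex (s, i))).mono (hG (max_le (Fin.le_def.1 hs) le_rfl)) le_rfl
      have hBs : MeasurableSet[G s] B := hG (Fin.le_def.1 hs) B hB
      simpa [ϑ, hs] using Measurable.ite (p := (· ∈ B)) hBs hzs measurable_const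
    · simp [ϑ, hs]
  have hconv : ∀ᵐ ω ∂P, ω ∈ B →
      Tendsto (fun k => u (σ k ω) ω) atTop (𝓝 (ϑ ω)) := by
    filter_upwards [ae_all_iff.2 hK] with ω hω hωB
    have hbdd : ∀ n, ‖u n ω‖ ≤ |K ω| * 2 := fun n =>
      norm_smul_le_of_relativeSize t (by simp) (hdiv ω hωB n) (hω n)
    have hcoord := hlim ω fun i _ => ⟨|K ω| * 2, fun n =>
      ((norm_le_pi_norm (u n ω (ofLex i).1) (ofLex i).2).trans
        (norm_le_pi_norm (u n ω) (ofLex i).1)).trans (hbdd n)⟩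
    refine tendsto_pi_nhds.2 fun s => ?_
    by_cases hs : t ≤ s
    · refine tendsto_pi_nhds.2 fun i => ?_
      simpa [ϑ, hωB, hs] using hcoord (toLex (s, i)) (Finset.mem_univ _)
    · have hzero : Tendsto (fun n => u n ω s) atTop (𝓝 0) :=
        squeeze_zero_norm (fun n => norm_smul_apply_le_of_relativeSize t (by positivity)
          (hdiv ω hωB n) (not_le.1 hs)) tendsto_one_div_add_atTop_nhds_zero_nat
      have hϑs : ϑ ω s = 0 := by
        ext i
        simp [ϑ, hs]
      rw [hϑs]
      exact hzero.comp (hσ ω)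
  have hrec : ∀ᵐ ω ∂P, 0 ≤ recessionModel V ω (ϑ ω) := by
    filter_upwards [hconv, hV0, ae_all_iff.2 fun n => (hX n).2] with ω hω hω0 hωf
    by_cases hωB : ω ∈ B
    · have hnorm : ∀ n : ℕ, (n : ℝ) + 1 < ‖X n ω t‖ := fun n =>
        lt_norm_of_lt_relativeSize t (hdiv ω hωB n)
      have htop : Tendsto (fun n : ℕ => ‖X n ω t‖) atTop atTop :=
        tendsto_atTop_mono (fun n => (le_add_of_nonneg_right zero_le_one).trans (hnorm n).le)
          tendsto_natCast_atTop_atTop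
      refine recessionModel_nonneg_of_tendsto (c := f ω) (htop.comp (hσ ω)) (hω hωB) fun k => ?_
      have hpos : 0 < ‖X (σ k ω) ω t‖ := lt_trans (by positivity) (hnorm _)
      simpa [u, smul_smul, mul_inv_cancel₀ hpos.ne'] using hωf (σ k ω)
    · have hϑ0 : ϑ ω = 0 := by
        ext s i
        simp [ϑ, hωB]
      rw [hϑ0]
      exact recessionModel_nonneg_of_tendsto (c := 0) tendsto_natCast_atTop_atTop
        tendsto_const_nhds fun k => by simp [hω0]
  rw [measure_eq_zero_iff_ae_notMem]
  filter_upwards [hNA ϑ hϑ hrec, hconv] with ω hω0 hω hωB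
  have hone : Tendsto (fun k => ‖u (σ k ω) ω t‖) atTop (𝓝 ‖ϑ ω t‖) :=
    ((tendsto_pi_nhds.1 (hω hωB)) t).norm
  have hconst : ∀ k, ‖u (σ k ω) ω t‖ = 1 := fun k =>
    norm_normalized_apply t (norm_pos_iff.1 (lt_trans (by positivity)
      (lt_norm_of_lt_relativeSize t (hdiv ω hωB (σ k ω)))))
  simp only [hconst, hω0, Pi.zero_apply, norm_zero] at hone
  exact one_ne_zero (tendsto_nhds_unique tendsto_const_nhds hone)

/-- Under no-arbitrage, superhedging strategies are controlled by their positions before `t`. -/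
theorem exists_norm_le_mul_pastPart {Ω : Type*} {mΩ : MeasurableSpace Ω} {P : Measure Ω}
    [IsFiniteMeasure P] {T d : ℕ} {G : ℕ → MeasurableSpace Ω} (hG : Monotone G)
    (hGle : ∀ n, G n ≤ mΩ) {V : Ω → (Fin T → Fin d → ℝ) → EReal}
    (hV0 : ∀ᵐ ω ∂P, V ω 0 = 0) (hNA : NAcond P (fun s : Fin T => G s) V) (f : Ω → ℝ) {t : ℕ}
    (ht : t ≤ T) :
    ∃ K : Ω → ℝ, Measurable K ∧ ∀ ϑ ∈ superhedges P G V f t,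
      ∀ᵐ ω ∂P, ‖ϑ ω‖ ≤ K ω * (1 + ‖pastPart t (ϑ ω)‖) := by
  induction ht using Nat.decreasingInduction with
  | self =>
    exact ⟨fun _ => 1, measurable_const, fun ϑ _ => ae_of_all _ fun ω => by
      simp [pastPart_eq_self]⟩
  | of_succ n hn ih =>
    obtain ⟨K, hK, hKbound⟩ := ih
    have hsub : superhedges P G V f n ⊆ superhedges P G V f (n + 1) := fun ϑ hϑ =>
      ⟨fun s => (hϑ.1 s).mono (hG (max_le_max_right _ n.le_succ)) le_rfl, hϑ.2⟩
    let t : Fin T := ⟨n, hn⟩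
    rcases exists_bound_or_diverging P (hGle n) (S := superhedges P G V f n)
      (ρ := relativeSize t) (fun X hX => measurable_relativeSize hG t hX.1)
      (fun X hX N hN => superhedges_glue hG hX hN) with ⟨R, hR, hRbound⟩ | ⟨B, X, hB, hPB, hX, hdiv⟩
    · refine ⟨fun ω => |K ω| * (2 + |R ω|), hK.abs.mul
        (measurable_const.add (hR.mono (hGle n) le_rfl).abs), fun ϑ hϑ => ?_⟩
      filter_upwards [hKbound ϑ (hsub hϑ), hRbound ϑ hϑ] with ω hω₁ hω₂
      have hp : 0 < 1 + ‖pastPart n (ϑ ω)‖ := by positivity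
      have hsize : ‖ϑ ω t‖ ≤ |R ω| * (1 + ‖pastPart n (ϑ ω)‖) :=
        (div_le_iff₀ hp).1 (hω₂.trans (le_abs_self _))
      have hsucc : ‖pastPart (n + 1) (ϑ ω)‖ ≤ ‖pastPart n (ϑ ω)‖ + ‖ϑ ω t‖ :=
        norm_pastPart_succ_le t (ϑ ω)
      calc ‖ϑ ω‖ ≤ K ω * (1 + ‖pastPart (n + 1) (ϑ ω)‖) := hω₁
        _ ≤ |K ω| * (1 + ‖pastPart (n + 1) (ϑ ω)‖) := by gcongr; exact le_abs_self _
        _ ≤ |K ω| * ((2 + |R ω|) * (1 + ‖pastPart n (ϑ ω)‖)) := by gcongr; linarith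
        _ = |K ω| * (2 + |R ω|) * (1 + ‖pastPart n (ϑ ω)‖) := by ring
    · exact absurd (measure_eq_zero_of_relativeSize_diverging hG hV0 hNA t hX
        (fun k => hKbound _ (hsub (hX k))) hB hdiv) hPB

/-- for a normal integrand market model satisfying NA and a random
variable `f`, there is a finite random variable `K` bounding (a.s.) every strategy
superhedging `f`. -/
theorem stmt11 {Ω : Type*} {mΩ : MeasurableSpace Ω} (P : Measure Ω) [IsProbabilityMeasure P]
    (T d : ℕ) (hT : 1 ≤ T) (hd : 1 ≤ d)
    (ℱ : Fin T → MeasurableSpace Ω) (hℱmono : Monotone ℱ) (hℱle : ∀ t, ℱ t ≤ mΩ)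
    -- V is a normal integrand market model:
    (V : Ω → (Fin T → Fin d → ℝ) → EReal)
    (hVjm : Measurable (Function.uncurry V))
    (hV0 : ∀ᵐ ω ∂P, V ω 0 = 0)
    (hVnotTop : ∀ ω x, V ω x ≠ ⊤)
    (hVusc : ∀ᵐ ω ∂P, UpperSemicontinuous (V ω))
    (hVhypo : HypoClosedMeas (mΩ := mΩ) V)
    -- satisfying the no-arbitrage condition:
    (hNA : NAcond P ℱ V)
    (f : Ω → ℝ) (hf : Measurable f) :
    ∃ K : Ω → ℝ, Measurable K ∧
      ∀ ϑ, AdaptedStrat ℱ ϑ → (∀ᵐ ω ∂P, (f ω : EReal) ≤ V ω (ϑ ω)) →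
        ∀ᵐ ω ∂P, ‖ϑ ω‖ ≤ K ω := by
  let G : ℕ → MeasurableSpace Ω := fun n => if h : n < T then ℱ ⟨n, h⟩ else mΩ
  have hGfin : (fun s : Fin T => G s) = ℱ := by
    ext1 s
    simp [G]
  have hGle : ∀ n, G n ≤ mΩ := fun n => by
    by_cases h : n < T
    · simpa [G, h] using hℱle ⟨n, h⟩
    · simp [G, h]
  have hG : Monotone G := fun a b hab => by
    by_cases hb : b < T
    · simpa [G, hb, hab.trans_lt hb] using
        hℱmono (show (⟨a, hab.trans_lt hb⟩ : Fin T) ≤ ⟨b, hb⟩ from hab)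
    · exact (hGle a).trans (by simp [G, hb])
  obtain ⟨K, hK, hbound⟩ :=
    exists_norm_le_mul_pastPart hG hGle hV0 (hGfin.symm ▸ hNA) f (Nat.zero_le T)
  refine ⟨K, hK, fun ϑ hϑ hϑf => ?_⟩
  have hmem : ϑ ∈ superhedges P G V f 0 := by
    refine ⟨?_, hϑf⟩
    simp only [Nat.zero_max]
    exact hGfin.symm ▸ hϑ
  filter_upwards [hbound ϑ hmem] with ω hω
  simpa [pastPart_zero] using hω

end
end

section
/- Let K : Ω ⇉ ℝ^n be a measurable correspondence with closed convex cone values and polar K°. Suppose V : Ω × ℝ^{dT} → ℝ^n ∪ {−∞} is a map such that for every measurable selection Z of the relative interior of K°, the scalarization V_Z(ω,x) := ⟨Z(ω), V(ω,x)⟩ (with ⟨Z,−∞⟩ := −∞) is a normal integrand. Then the hypograph correspondence ω ↦ { (x,y) ∈ ℝ^{dT} × ℝ^n : V(ω,x) − y ∈ K(ω) } is closed-valued and measurable. -/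
open MeasureTheory Filter Topology

noncomputable section

/-- A measurable correspondence: `{ω : C(ω) ∩ B ≠ ∅} ∈ 𝓕` for every open ball `B`. -/
def MeasCorr {Ω : Type*} [MeasurableSpace Ω] {E : Type*} [PseudoMetricSpace E]
    (C : Ω → Set E) : Prop :=
  ∀ (c : E) (r : ℝ), MeasurableSet {ω | (Metric.ball c r ∩ C ω).Nonempty}

/-- The (positive) polar cone of a set, w.r.t. the standard scalar product on `ℝ^n`. -/
def polarCone {n : ℕ} (K : Set (Fin n → ℝ)) : Set (Fin n → ℝ) :=
  {y | ∀ x ∈ K, 0 ≤ ∑ i, x i * y i}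

/-- The scalarization `V_Z(ω,x) = ⟨Z(ω), V(ω,x)⟩`, with the convention
`⟨Z, −∞⟩ = −∞`. -/
def scalarize {Ω : Type*} {T d n : ℕ} (Z : Ω → Fin n → ℝ)
    (V : Ω → (Fin T → Fin d → ℝ) → WithBot (Fin n → ℝ)) (ω : Ω)
    (x : Fin T → Fin d → ℝ) : EReal :=
  WithBot.recBotCoe (⊥ : EReal) (fun v => ((∑ i, Z ω i * v i : ℝ) : EReal)) (V ω x)

section Correspondence

variable {Ω : Type*} [MeasurableSpace Ω]

/-- A measurable correspondence into a second countable space hits every open set measurably. -/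
theorem MeasCorr.measurableSet_inter_isOpen {E : Type*} [PseudoMetricSpace E]
    [SecondCountableTopology E] {C : Ω → Set E} (hC : MeasCorr C) {U : Set E} (hU : IsOpen U) :
    MeasurableSet {ω | (U ∩ C ω).Nonempty} := by
  choose r hr0 hr using fun x : U => Metric.isOpen_iff.1 hU x x.2
  obtain ⟨S, hS, hSU⟩ := TopologicalSpace.isOpen_iUnion_countable
    (fun x : U => Metric.ball (x : E) (r x)) (fun _ => Metric.isOpen_ball)
  have hU' : U = ⋃ x ∈ S, Metric.ball (x : E) (r x) := by
    rw [hSU]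
    refine Set.Subset.antisymm (fun x hx => Set.mem_iUnion.2 ⟨⟨x, hx⟩, ?_⟩)
      (Set.iUnion_subset hr)
    exact Metric.mem_ball_self (hr0 _)
  have : {ω | (U ∩ C ω).Nonempty} =
      ⋃ x ∈ S, {ω | (Metric.ball (x : E) (r x) ∩ C ω).Nonempty} := by
    ext ω
    simp only [Set.mem_ofPred_eq, Set.mem_iUnion]
    constructor
    · rintro ⟨z, hzU, hzC⟩
      rw [hU'] at hzU
      obtain ⟨x, hxS, hzx⟩ := Set.mem_iUnion₂.1 hzU
      exact ⟨x, hxS, z, hzx, hzC⟩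
    · rintro ⟨x, -, z, hzx, hzC⟩
      exact ⟨z, hr x hzx, hzC⟩
  rw [this]
  exact MeasurableSet.biUnion hS fun x _ => hC _ _

/-- A measurable correspondence hits balls with measurable random center measurably. -/
theorem MeasCorr.measurableSet_inter_ball {F : Type*} [PseudoMetricSpace F]
    [SecondCountableTopology F] [MeasurableSpace F] [OpensMeasurableSpace F] {C : Ω → Set F}
    (hC : MeasCorr C) {c : Ω → F} (hc : Measurable c) (ε : ℝ) :
    MeasurableSet {ω | (Metric.ball (c ω) ε ∩ C ω).Nonempty} := by
  rcases isEmpty_or_nonempty F with hF | hF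
  · convert MeasurableSet.empty using 1
    ext ω
    exact (iff_of_false (fun ⟨x, _⟩ => hF.elim x) id)
  have : {ω | (Metric.ball (c ω) ε ∩ C ω).Nonempty} =
      ⋃ (k : ℕ) (m : ℕ), {ω | dist (c ω) (TopologicalSpace.denseSeq F k) < 1 / (m + 1 : ℝ)} ∩
        {ω | (Metric.ball (TopologicalSpace.denseSeq F k) (ε - 1 / (m + 1 : ℝ)) ∩
          C ω).Nonempty} := by
    ext ω
    simp only [Set.mem_ofPred_eq, Set.mem_iUnion, Set.mem_inter_iff]
    constructor
    · rintro ⟨z, hz, hzC⟩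
      rw [Metric.mem_ball] at hz
      obtain ⟨m, hm⟩ := exists_nat_one_div_lt (show 0 < (ε - dist z (c ω)) / 2 by linarith)
      obtain ⟨k, hk⟩ := (TopologicalSpace.denseRange_denseSeq F).exists_dist_lt (c ω)
        (show (0 : ℝ) < 1 / (m + 1 : ℝ) by positivity)
      refine ⟨k, m, hk, z, ?_, hzC⟩
      rw [Metric.mem_ball]
      have := dist_triangle z (c ω) (TopologicalSpace.denseSeq F k)
      linarith
    · rintro ⟨k, m, hk, z, hz, hzC⟩
      refine ⟨z, ?_, hzC⟩
      rw [Metric.mem_ball] at hz ⊢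
      have := dist_triangle_right z (c ω) (TopologicalSpace.denseSeq F k)
      linarith
  rw [this]
  refine MeasurableSet.iUnion fun k => MeasurableSet.iUnion fun m =>
    MeasurableSet.inter ?_ (hC _ _)
  exact measurableSet_lt (hc.dist measurable_const) measurable_const

/-- A countable intersection of preimages of closed-valued measurable correspondences under
Carathéodory maps is measurable. -/
theorem MeasCorr.iInter_preimage {E F : Type*} [PseudoMetricSpace E] [ProperSpace E]
    [PseudoMetricSpace F] [SecondCountableTopology F] [MeasurableSpace F]
    [OpensMeasurableSpace F] {H : ℕ → Ω → Set F} (hH : ∀ j, MeasCorr (H j))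
    (hcl : ∀ j ω, IsClosed (H j ω)) {φ : ℕ → Ω → E → F} (hmeas : ∀ j e, Measurable fun ω => φ j ω e)
    (hcont : ∀ j ω, Continuous (φ j ω)) :
    MeasCorr fun ω => ⋂ j, φ j ω ⁻¹' H j ω := by
  have compact_case : ∀ B : Set E, IsCompact B →
      MeasurableSet {ω | (B ∩ ⋂ j, φ j ω ⁻¹' H j ω).Nonempty} := by
    intro B hB
    obtain ⟨D, hDB, hDc, hD⟩ :=
      (TopologicalSpace.IsSeparable.of_separableSpace B).exists_countable_dense_subset
    have : {ω | (B ∩ ⋂ j, φ j ω ⁻¹' H j ω).Nonempty} =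
        ⋂ k : ℕ, ⋃ e ∈ D, ⋂ j ∈ Set.Iic k,
          {ω | (Metric.ball (φ j ω e) (1 / (k + 1 : ℝ)) ∩ H j ω).Nonempty} := by
      ext ω
      simp only [Set.mem_ofPred_eq, Set.mem_iInter, Set.mem_iUnion, exists_prop]
      constructor
      · rintro ⟨z, hzB, hz⟩ k
        have hε : (0 : ℝ) < 1 / (k + 1 : ℝ) := by positivity
        have hnear : ∀ᶠ e in 𝓝 z, ∀ j ∈ Set.Iic k, dist (φ j ω e) (φ j ω z) < 1 / (k + 1 : ℝ) :=
          (Set.finite_Iic k).eventually_all.2 fun j _ =>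
            (hcont j ω).continuousAt.eventually (Metric.ball_mem_nhds _ hε)
        obtain ⟨e, he, heD⟩ := mem_closure_iff_nhds.1 (hD hzB) _ hnear
        exact ⟨e, heD, fun j hj => ⟨φ j ω z, by rw [Metric.mem_ball, dist_comm]; exact he j hj,
          Set.mem_iInter.1 hz j⟩⟩
      · intro h
        choose e heD he using h
        obtain ⟨z, hzB, ψ, hψ, hlim⟩ := hB.tendsto_subseq fun k => hDB (heD k)
        refine ⟨z, hzB, Set.mem_iInter.2 fun j => ?_⟩
        rw [Set.mem_preimage, ← (hcl j ω).closure_eq]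
        refine Metric.mem_closure_iff.2 fun ε hε => ?_
        have hφ : Tendsto (fun k => φ j ω (e (ψ k))) atTop (𝓝 (φ j ω z)) :=
          ((hcont j ω).tendsto z).comp hlim
        have hsmall : Tendsto (fun k => 1 / ((ψ k : ℝ) + 1)) atTop (𝓝 0) :=
          tendsto_one_div_add_atTop_nhds_zero_nat.comp hψ.tendsto_atTop
        obtain ⟨k, ⟨hk₁, hk₂⟩, hk₃⟩ := ((hφ.eventually (Metric.ball_mem_nhds _ (half_pos hε))).and
          (hsmall.eventually_lt_const (half_pos hε))).and
          (hψ.tendsto_atTop.eventually_ge_atTop j) |>.exists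
        obtain ⟨w, hw, hwH⟩ := he (ψ k) j hk₃
        refine ⟨w, hwH, ?_⟩
        rw [Metric.mem_ball] at hw
        have hk₁' : dist (φ j ω (e (ψ k))) (φ j ω z) < ε / 2 := hk₁
        have := dist_triangle_right (φ j ω z) w (φ j ω (e (ψ k)))
        rw [dist_comm] at hk₁'
        linarith
    rw [this]
    exact MeasurableSet.iInter fun k => MeasurableSet.biUnion hDc fun e _ =>
      MeasurableSet.biInter (Set.to_countable _) fun j _ =>
        (hH j).measurableSet_inter_ball (hmeas j e) _
  intro c r
  have : {ω | (Metric.ball c r ∩ ⋂ j, φ j ω ⁻¹' H j ω).Nonempty} =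
      ⋃ m : ℕ, {ω | (Metric.closedBall c (r - 1 / (m + 1 : ℝ)) ∩
        ⋂ j, φ j ω ⁻¹' H j ω).Nonempty} := by
    ext ω
    simp only [Set.mem_ofPred_eq, Set.mem_iUnion]
    constructor
    · rintro ⟨z, hz, hzC⟩
      rw [Metric.mem_ball] at hz
      obtain ⟨m, hm⟩ := exists_nat_one_div_lt (sub_pos.2 hz)
      exact ⟨m, z, Metric.mem_closedBall.2 (by linarith), hzC⟩
    · rintro ⟨m, z, hz, hzC⟩
      refine ⟨z, Metric.mem_ball.2 ((Metric.mem_closedBall.1 hz).trans_lt ?_), hzC⟩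
      have : (0 : ℝ) < 1 / (m + 1 : ℝ) := by positivity
      linarith
  rw [this]
  exact MeasurableSet.iUnion fun m => compact_case _ (isCompact_closedBall _ _)

/-- A map is measurable if its singleton-valued correspondence is. -/
theorem MeasCorr.measurable_of_singleton {E : Type*} [PseudoMetricSpace E]
    [SecondCountableTopology E] [MeasurableSpace E] [BorelSpace E] {p : Ω → E}
    (hp : MeasCorr fun ω => {p ω}) : Measurable p :=
  measurable_of_isOpen fun U hU => by
    convert hp.measurableSet_inter_isOpen hU using 1
    ext ω
    simp only [Set.mem_preimage, Set.mem_ofPred_eq, Set.inter_singleton_nonempty]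

/-- Nearest-point selections of a closed convex measurable correspondence are measurable. -/
theorem MeasCorr.exists_measurable_nearest {E : Type*} [NormedAddCommGroup E]
    [InnerProductSpace ℝ E] [FiniteDimensional ℝ E] [MeasurableSpace E] [BorelSpace E]
    {C : Ω → Set E} (hC : MeasCorr C) (hcl : ∀ ω, IsClosed (C ω)) (hconv : ∀ ω, Convex ℝ (C ω))
    (hne : ∀ ω, (C ω).Nonempty) (a : E) :
    ∃ p : Ω → E, Measurable p ∧ ∀ ω, p ω ∈ C ω ∧ Metric.infDist a (C ω) = dist a (p ω) := by
  have : ProperSpace E := FiniteDimensional.proper ℝ E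
  choose p hpC hp using fun ω => (hcl ω).exists_infDist_eq_dist (hne ω) a
  refine ⟨p, ?_, fun ω => ⟨hpC ω, hp ω⟩⟩
  have hd : Measurable fun ω => Metric.infDist a (C ω) := by
    refine measurable_of_Iio fun r => ?_
    convert hC a r using 1
    ext ω
    rw [Set.mem_preimage, Set.mem_Iio, Metric.infDist_lt_iff (hne ω), Set.mem_ofPred_eq]
    exact ⟨fun ⟨y, hy, h⟩ => ⟨y, by rwa [Metric.mem_ball, dist_comm], hy⟩,
      fun ⟨y, h, hy⟩ => ⟨y, hy, by rwa [dist_comm]⟩⟩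
  have huniq : ∀ ω, ∀ x ∈ C ω, dist x a ≤ Metric.infDist a (C ω) → x = p ω := by
    intro ω x hx hxd
    by_contra hxp
    have hmid : midpoint ℝ x (p ω) ∈ C ω := (hconv ω).midpoint_mem hx (hpC ω)
    have h₁ := Metric.infDist_le_dist_of_mem (x := a) hmid
    have h₂ := combo_mem_ball_of_ne (Metric.mem_closedBall.2 hxd)
      (Metric.mem_closedBall'.2 (hp ω).ge) hxp (half_pos one_pos) (half_pos one_pos)
      (add_halves (1 : ℝ))
    rw [← smul_add, Metric.mem_ball'] at h₂
    rw [midpoint_eq_smul_add, invOf_eq_inv, ← one_div] at h₁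
    exact absurd h₂ h₁.not_gt
  apply MeasCorr.measurable_of_singleton
  have key := MeasCorr.iInter_preimage (E := E) (F := E × ℝ)
    (H := fun _ ω => C ω ×ˢ Set.Iic 0)
    (φ := fun _ ω x => (x, dist x a - Metric.infDist a (C ω)))
    (fun _ c r => by
      have : {ω | (Metric.ball c r ∩ C ω ×ˢ Set.Iic 0).Nonempty} =
          {ω | (Metric.ball c.1 r ∩ C ω).Nonempty} ∩
            {_ω | (Metric.ball c.2 r ∩ Set.Iic 0).Nonempty} := by
        ext ω
        obtain ⟨c₁, c₂⟩ := c
        rw [Set.mem_ofPred_eq, ← ball_prod_same, Set.prod_inter_prod, Set.prod_nonempty_iff]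
        rfl
      rw [this]
      exact (hC _ _).inter (MeasurableSet.const _))
    (fun _ ω => (hcl ω).prod isClosed_Iic)
    (fun _ e => measurable_const.prodMk (measurable_const.sub hd))
    (fun _ ω => by fun_prop)
  convert key using 2 with ω
  ext x
  simp only [Set.mem_singleton_iff, Set.mem_iInter, Set.mem_preimage, Set.mem_prod, Set.mem_Iic,
    sub_nonpos, forall_const]
  exact ⟨fun h => h ▸ ⟨hpC ω, by rw [dist_comm]; exact (hp ω).ge⟩, fun h => huniq ω x h.1 h.2⟩

/-- Castaing representation of a closed convex measurable correspondence. -/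
theorem MeasCorr.exists_castaing {n : ℕ} {C : Ω → Set (Fin n → ℝ)} (hC : MeasCorr C)
    (hcl : ∀ ω, IsClosed (C ω)) (hconv : ∀ ω, Convex ℝ (C ω)) (hne : ∀ ω, (C ω).Nonempty) :
    ∃ Z : ℕ → Ω → Fin n → ℝ, (∀ k, Measurable (Z k)) ∧ (∀ k ω, Z k ω ∈ C ω) ∧
      ∀ ω, C ω ⊆ closure (Set.range fun k => Z k ω) := by
  let L := EuclideanSpace.equiv (Fin n) ℝ
  have hC' : MeasCorr fun ω => L ⁻¹' C ω := by
    intro c r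
    convert hC.measurableSet_inter_isOpen
      (Metric.isOpen_ball.preimage L.symm.continuous : IsOpen (L.symm ⁻¹' Metric.ball c r)) using 1
    ext ω
    exact ⟨fun ⟨x, hx, hxC⟩ => ⟨L x, by simpa using hx, hxC⟩,
      fun ⟨x, hx, hxC⟩ => ⟨L.symm x, hx, by simpa using hxC⟩⟩
  choose p hpm hp using fun a => hC'.exists_measurable_nearest
    (fun ω => (hcl ω).preimage L.continuous)
    (fun ω => (hconv ω).linear_preimage L.toLinearMap)
    (fun ω => (hne ω).preimage L.surjective) a
  refine ⟨fun k ω => L (p (TopologicalSpace.denseSeq _ k) ω),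
    fun k => L.continuous.measurable.comp (hpm _), fun k ω => (hp _ ω).1, fun ω z hz => ?_⟩
  have hz' : L.symm z ∈ closure (Set.range fun k => p (TopologicalSpace.denseSeq _ k) ω) := by
    refine Metric.mem_closure_range_iff.2 fun ε hε => ?_
    obtain ⟨k, hk⟩ := (TopologicalSpace.denseRange_denseSeq _).exists_dist_lt (L.symm z)
      (half_pos hε)
    refine ⟨k, ?_⟩
    have h₁ := (hp (TopologicalSpace.denseSeq _ k) ω).2.symm.le.trans
      (Metric.infDist_le_dist_of_mem (show L.symm z ∈ L ⁻¹' C ω by simpa using hz))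
    have h₂ := dist_triangle (L.symm z) (TopologicalSpace.denseSeq _ k)
      (p (TopologicalSpace.denseSeq _ k) ω)
    rw [dist_comm _ (L.symm z)] at h₁
    linarith
  have := map_mem_closure L.continuous hz' (t := Set.range fun k =>
    L (p (TopologicalSpace.denseSeq _ k) ω)) (by rintro _ ⟨k, rfl⟩; exact ⟨k, rfl⟩)
  simpa using this

end Correspondence

section RelativeInterior

variable {E : Type*} [NormedAddCommGroup E] [NormedSpace ℝ E] {C : Set E}

/-- Metric description of the relative interior. -/
theorem mem_intrinsicInterior_iff_exists_ball {x : E} :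
    x ∈ intrinsicInterior ℝ C ↔ x ∈ affineSpan ℝ C ∧
      ∃ ε > 0, ∀ y ∈ affineSpan ℝ C, dist y x < ε → y ∈ C := by
  rw [mem_intrinsicInterior]
  constructor
  · rintro ⟨y, hy, rfl⟩
    obtain ⟨ε, hε, h⟩ := Metric.mem_nhds_iff.1 (mem_interior_iff_mem_nhds.1 hy)
    exact ⟨y.2, ε, hε, fun z hz hzy =>
      h (show (⟨z, hz⟩ : affineSpan ℝ C) ∈ Metric.ball y ε from hzy)⟩
  · rintro ⟨hx, ε, hε, h⟩
    refine ⟨⟨x, hx⟩, mem_interior_iff_mem_nhds.2 (Metric.mem_nhds_iff.2 ⟨ε, hε, ?_⟩), rfl⟩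
    exact fun z hz => h z z.2 hz

/-- For a set closed under addition and containing `0`, adding a point of the set preserves the
relative interior. -/
theorem add_mem_intrinsicInterior (h0 : (0 : E) ∈ C) (hadd : ∀ x ∈ C, ∀ y ∈ C, x + y ∈ C)
    {x c : E} (hx : x ∈ intrinsicInterior ℝ C) (hc : c ∈ C) :
    x + c ∈ intrinsicInterior ℝ C := by
  have hxC := intrinsicInterior_subset hx
  obtain ⟨-, ε, hε, h⟩ := mem_intrinsicInterior_iff_exists_ball.1 hx
  refine mem_intrinsicInterior_iff_exists_ball.2
    ⟨subset_affineSpan ℝ C (hadd x hxC c hc), ε, hε, fun y hy hyx => ?_⟩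
  have hyc : y - c ∈ affineSpan ℝ C := by
    simpa using (affineSpan ℝ C).smul_vsub_vadd_mem 1 hy (subset_affineSpan ℝ C hc)
      (subset_affineSpan ℝ C h0)
  have := hadd _ (h (y - c) hyc ?_) c hc
  · simpa using this
  · rwa [dist_eq_norm, sub_sub, add_comm c, ← dist_eq_norm]

/-- The relative interior of a cone is stable under positive scaling. -/
theorem smul_mem_intrinsicInterior (h0 : (0 : E) ∈ C)
    (hsmul : ∀ c : ℝ, 0 ≤ c → ∀ x ∈ C, c • x ∈ C) {x : E} (hx : x ∈ intrinsicInterior ℝ C)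
    {t : ℝ} (ht : 0 < t) : t • x ∈ intrinsicInterior ℝ C := by
  have hxC := intrinsicInterior_subset hx
  obtain ⟨-, ε, hε, h⟩ := mem_intrinsicInterior_iff_exists_ball.1 hx
  refine mem_intrinsicInterior_iff_exists_ball.2
    ⟨subset_affineSpan ℝ C (hsmul t ht.le x hxC), t * ε, mul_pos ht hε, fun y hy hyx => ?_⟩
  have hyt : t⁻¹ • y ∈ affineSpan ℝ C := by
    simpa using (affineSpan ℝ C).smul_vsub_vadd_mem t⁻¹ hy (subset_affineSpan ℝ C h0)
      (subset_affineSpan ℝ C h0)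
  have := hsmul t ht.le _ (h (t⁻¹ • y) hyt ?_)
  · rwa [smul_inv_smul₀ ht.ne'] at this
  · have hdist : dist (t⁻¹ • y) x = t⁻¹ * dist y (t • x) := by
      rw [← inv_smul_smul₀ ht.ne' x, dist_smul₀, smul_inv_smul₀ ht.ne', Real.norm_of_nonneg
        (inv_nonneg.2 ht.le)]
    rw [hdist, inv_mul_lt_iff₀ ht]
    exact hyx

/-- A dense subset of a convex set meets its relative interior. -/
theorem exists_mem_intrinsicInterior_of_dense [FiniteDimensional ℝ E] {ι : Type*} {z : ι → E}
    (hconv : Convex ℝ C) (hne : C.Nonempty) (hz : ∀ k, z k ∈ C)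
    (hdense : C ⊆ closure (Set.range z)) : ∃ k, z k ∈ intrinsicInterior ℝ C := by
  obtain ⟨x, hx⟩ := hne.intrinsicInterior hconv
  obtain ⟨-, ε, hε, h⟩ := mem_intrinsicInterior_iff_exists_ball.1 hx
  obtain ⟨k, hk⟩ := Metric.mem_closure_range_iff.1 (hdense (intrinsicInterior_subset hx)) (ε / 2)
    (half_pos hε)
  refine ⟨k, mem_intrinsicInterior_iff_exists_ball.2
    ⟨subset_affineSpan ℝ C (hz k), ε / 2, half_pos hε, fun y hy hyk => h y hy ?_⟩⟩
  have := dist_triangle_right y x (z k)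
  linarith

/-- A convergent series in a closed convex cone with a term in the relative interior has its sum in
the relative interior. -/
theorem tsum_mem_intrinsicInterior (hcl : IsClosed C) (h0 : (0 : E) ∈ C)
    (hadd : ∀ x ∈ C, ∀ y ∈ C, x + y ∈ C) {s : ℕ → E} (hs : ∀ k, s k ∈ C) (hsum : Summable s)
    (hri : ∃ k, s k ∈ intrinsicInterior ℝ C) : ∑' k, s k ∈ intrinsicInterior ℝ C := by
  obtain ⟨k, hk⟩ := hri
  let r : ℕ → E := Function.update s k 0
  have hr : ∀ j, r j ∈ C := fun j => by
    by_cases hj : j = k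
    · subst hj; simpa [r] using h0
    · simpa [r, hj] using hs j
  have hrsum : HasSum r (∑' k, s k - s k) := by
    have := hsum.hasSum.update k (0 : E)
    rwa [zero_sub, neg_add_eq_sub] at this
  have hrC : ∑' k, s k - s k ∈ C := by
    refine hcl.mem_of_tendsto hrsum (Eventually.of_forall fun S => ?_)
    exact Finset.sum_induction r (· ∈ C) (fun x y hx hy => hadd x hx y hy) h0 fun j _ => hr j
  simpa using add_mem_intrinsicInterior h0 hadd hk hrC

end RelativeInterior

section Polar

variable {n : ℕ}

theorem zero_mem_polarCone (K : Set (Fin n → ℝ)) : (0 : Fin n → ℝ) ∈ polarCone K :=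
  fun x _ => by simp

theorem add_mem_polarCone (K : Set (Fin n → ℝ)) :
    ∀ x ∈ polarCone K, ∀ y ∈ polarCone K, x + y ∈ polarCone K := fun x hx y hy z hz => by
  simpa [mul_add, Finset.sum_add_distrib] using add_nonneg (hx z hz) (hy z hz)

theorem smul_mem_polarCone (K : Set (Fin n → ℝ)) :
    ∀ c : ℝ, 0 ≤ c → ∀ x ∈ polarCone K, c • x ∈ polarCone K := fun c hc x hx z hz => by
  simpa [Finset.mul_sum, mul_left_comm] using mul_nonneg hc (hx z hz)

theorem convex_polarCone (K : Set (Fin n → ℝ)) : Convex ℝ (polarCone K) :=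
  fun x hx y hy a b ha hb _ => add_mem_polarCone K _ (smul_mem_polarCone K a ha x hx) _
    (smul_mem_polarCone K b hb y hy)

theorem isClosed_polarCone (K : Set (Fin n → ℝ)) : IsClosed (polarCone K) := by
  have : polarCone K = ⋂ x ∈ K, {y | 0 ≤ ∑ i, x i * y i} := by
    ext y
    simp [polarCone]
  rw [this]
  exact isClosed_biInter fun x _ => isClosed_le continuous_const (by fun_prop)

/-- The bipolar theorem for closed convex cones. -/
theorem mem_of_forall_mem_polarCone {K : Set (Fin n → ℝ)} (hcl : IsClosed K) (hconv : Convex ℝ K)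
    (hcone : ∀ c : ℝ, 0 ≤ c → ∀ x ∈ K, c • x ∈ K) (h0 : (0 : Fin n → ℝ) ∈ K) {w : Fin n → ℝ}
    (hw : ∀ z ∈ polarCone K, 0 ≤ ∑ i, z i * w i) : w ∈ K := by
  by_contra hwK
  obtain ⟨f, u, hfw, hfK⟩ := geometric_hahn_banach_point_closed hconv hcl hwK
  have hu : u < 0 := by simpa using hfK 0 h0
  have hf : ∀ x, f x = ∑ i, x i * f (Pi.single i 1) := fun x => by
    conv_lhs => rw [pi_eq_sum_univ' x]
    simp [map_sum]
  have hpol : (fun i => f (Pi.single i 1)) ∈ polarCone K := by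
    intro x hx
    rw [← hf]
    by_contra! hneg
    have := hfK _ (hcone (u / f x) (div_nonneg_of_nonpos hu.le hneg.le) x hx)
    rw [map_smul, smul_eq_mul, div_mul_cancel₀ _ hneg.ne] at this
    exact lt_irrefl _ this
  have := hw _ hpol
  simp only [mul_comm _ (w _)] at this
  rw [← hf] at this
  linarith

variable {Ω : Type*} [MeasurableSpace Ω] {K : Ω → Set (Fin n → ℝ)}

/-- The polar of a closed convex measurable correspondence is measurable. -/
theorem MeasCorr.polarCone (hK : MeasCorr K) (hcl : ∀ ω, IsClosed (K ω))
    (hconv : ∀ ω, Convex ℝ (K ω)) (hne : ∀ ω, (K ω).Nonempty) :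
    MeasCorr fun ω => polarCone (K ω) := by
  obtain ⟨X, hXm, hXK, hX⟩ := hK.exists_castaing hcl hconv hne
  have key := MeasCorr.iInter_preimage (Ω := Ω) (E := Fin n → ℝ) (F := ℝ)
    (H := fun _ _ => Set.Ici 0) (φ := fun k ω y => ∑ i, X k ω i * y i)
    (fun _ _ _ => MeasurableSet.const _) (fun _ _ => isClosed_Ici)
    (fun k e => Finset.measurable_sum _ fun i _ =>
      ((measurable_pi_apply i).comp (hXm k)).mul_const _)
    (fun _ _ => by fun_prop)
  convert key using 2 with ω
  ext y
  simp only [Set.mem_iInter, Set.mem_preimage, Set.mem_Ici]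
  refine ⟨fun hy k => hy _ (hXK k ω), fun hy x hx => ?_⟩
  have hclosed : IsClosed {x : Fin n → ℝ | 0 ≤ ∑ i, x i * y i} :=
    isClosed_le continuous_const (by fun_prop)
  exact closure_minimal (by rintro _ ⟨k, rfl⟩; exact hy k) hclosed (hX ω hx)

/-- Countably many measurable selections of the relative interior of the polar determine a closed
convex cone correspondence. -/
theorem MeasCorr.exists_selections_intrinsicInterior_polarCone (hK : MeasCorr K)
    (hcl : ∀ ω, IsClosed (K ω)) (hconv : ∀ ω, Convex ℝ (K ω))
    (hcone : ∀ ω (c : ℝ), 0 ≤ c → ∀ x ∈ K ω, c • x ∈ K ω)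
    (h0 : ∀ ω, (0 : Fin n → ℝ) ∈ K ω) :
    ∃ Z : ℕ → Ω → Fin n → ℝ, (∀ k, Measurable (Z k)) ∧
      (∀ k ω, Z k ω ∈ intrinsicInterior ℝ (_root_.polarCone (K ω))) ∧
      ∀ ω w, (∀ k, 0 ≤ ∑ i, Z k ω i * w i) → w ∈ K ω := by
  obtain ⟨X, hXm, hXK, hX⟩ := (hK.polarCone hcl hconv fun ω => ⟨0, h0 ω⟩).exists_castaing
    (fun ω => isClosed_polarCone _) (fun ω => convex_polarCone _)
    (fun ω => ⟨0, zero_mem_polarCone _⟩)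
  let s : ℕ → Ω → Fin n → ℝ := fun k ω => ((1 / 2 : ℝ) ^ k / (1 + ‖X k ω‖)) • X k ω
  have hweight : ∀ k ω, 0 < (1 / 2 : ℝ) ^ k / (1 + ‖X k ω‖) := fun k ω => by positivity
  have hsm : ∀ k, Measurable (s k) := fun k =>
    (measurable_const.div (measurable_const.add (hXm k).norm)).smul (hXm k)
  have hsK : ∀ k ω, s k ω ∈ _root_.polarCone (K ω) := fun k ω =>
    smul_mem_polarCone _ _ (hweight k ω).le _ (hXK k ω)
  have hsum : ∀ ω, Summable fun k => s k ω := fun ω => by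
    refine Summable.of_norm_bounded summable_geometric_two fun k => ?_
    rw [norm_smul, Real.norm_of_nonneg (hweight k ω).le, div_mul_eq_mul_div]
    refine div_le_of_le_mul₀ (by positivity) (by positivity) ?_
    gcongr
    linarith
  let Y : Ω → Fin n → ℝ := fun ω => ∑' k, s k ω
  have hYm : Measurable Y :=
    measurable_of_tendsto_metrizable (f := fun N ω => ∑ k ∈ Finset.range N, s k ω)
      (fun N => Finset.measurable_sum _ fun k _ => hsm k)
      (tendsto_pi_nhds.2 fun ω => (hsum ω).hasSum.tendsto_sum_nat)
  have hY : ∀ ω, Y ω ∈ intrinsicInterior ℝ (_root_.polarCone (K ω)) := fun ω => by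
    obtain ⟨k, hk⟩ := exists_mem_intrinsicInterior_of_dense (convex_polarCone (K ω))
      ⟨0, zero_mem_polarCone _⟩ (fun k => hXK k ω) (hX ω)
    exact tsum_mem_intrinsicInterior (isClosed_polarCone _) (zero_mem_polarCone _)
      (add_mem_polarCone _) (fun k => hsK k ω) (hsum ω) ⟨k, smul_mem_intrinsicInterior
        (zero_mem_polarCone _) (smul_mem_polarCone _) hk (hweight k ω)⟩
  refine ⟨fun k ω => Y ω + (k.unpair.2 : ℝ) • X k.unpair.1 ω,
    fun k => hYm.add ((hXm _).const_smul (_ : ℝ)), fun k ω => add_mem_intrinsicInterior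
      (zero_mem_polarCone _) (add_mem_polarCone _) (hY ω)
      (smul_mem_polarCone _ _ (Nat.cast_nonneg _) _ (hXK _ ω)), fun ω w hw => ?_⟩
  refine mem_of_forall_mem_polarCone (hcl ω) (hconv ω) (hcone ω) (h0 ω) fun z hz => ?_
  have hXw : ∀ k, 0 ≤ ∑ i, X k ω i * w i := by
    intro k
    by_contra! hneg
    obtain ⟨m, hm⟩ := exists_nat_gt ((∑ i, Y ω i * w i) / -(∑ i, X k ω i * w i))
    rw [div_lt_iff₀ (neg_pos.2 hneg)] at hm
    have := hw (Nat.pair k m)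
    simp only [Nat.unpair_pair, Pi.add_apply, Pi.smul_apply, smul_eq_mul, add_mul, mul_assoc,
      Finset.sum_add_distrib, ← Finset.mul_sum] at this
    linarith
  have hclosed : IsClosed {z : Fin n → ℝ | 0 ≤ ∑ i, z i * w i} :=
    isClosed_le continuous_const (by fun_prop)
  exact closure_minimal (by rintro _ ⟨k, rfl⟩; exact hXw k) hclosed (hX ω hz)

end Polar

/-- if every scalarization `V_Z` of the `ℝ^n ∪ {−∞}`-valued map `V`, by
measurable selections `Z` of `ri K°`, is a normal integrand, then the hypograph
correspondence `ω ↦ {(x,y) : V(ω,x) − y ∈ K(ω)}` is closed valued and measurable. -/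
theorem stmt15 {Ω : Type*} {mΩ : MeasurableSpace Ω} (P : Measure Ω) [IsProbabilityMeasure P]
    (T d n : ℕ) (hT : 1 ≤ T) (hd : 1 ≤ d)
    -- K: a measurable correspondence with closed convex cone values
    (K : Ω → Set (Fin n → ℝ))
    (hKmeas : MeasCorr K)
    (hKclosed : ∀ ω, IsClosed (K ω))
    (hKconv : ∀ ω, Convex ℝ (K ω))
    (hKcone : ∀ ω (c : ℝ), 0 ≤ c → ∀ x ∈ K ω, c • x ∈ K ω)
    (hK0 : ∀ ω, (0 : Fin n → ℝ) ∈ K ω)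
    -- V with normal-integrand scalarizations
    (V : Ω → (Fin T → Fin d → ℝ) → WithBot (Fin n → ℝ))
    (hscal : ∀ Z : Ω → Fin n → ℝ, Measurable Z →
      (∀ ω, Z ω ∈ intrinsicInterior ℝ (polarCone (K ω))) →
      (∀ ω, IsClosed {xb : (Fin T → Fin d → ℝ) × ℝ |
          (xb.2 : EReal) ≤ scalarize Z V ω xb.1}) ∧
      (∀ (c : (Fin T → Fin d → ℝ) × ℝ) (s : ℝ),
        MeasurableSet {ω | (Metric.ball c s ∩ {xb : (Fin T → Fin d → ℝ) × ℝ |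
          (xb.2 : EReal) ≤ scalarize Z V ω xb.1}).Nonempty})) :
    -- conclusion: the vector hypograph correspondence is closed valued and measurable
    (∀ ω, IsClosed {xy : (Fin T → Fin d → ℝ) × (Fin n → ℝ) |
        ∃ v : Fin n → ℝ, V ω xy.1 = (v : WithBot (Fin n → ℝ)) ∧ v - xy.2 ∈ K ω}) ∧
    MeasCorr (fun ω => {xy : (Fin T → Fin d → ℝ) × (Fin n → ℝ) |
        ∃ v : Fin n → ℝ, V ω xy.1 = (v : WithBot (Fin n → ℝ)) ∧ v - xy.2 ∈ K ω}) := by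
  obtain ⟨Z, hZm, hZri, hZK⟩ := hKmeas.exists_selections_intrinsicInterior_polarCone hKclosed
    hKconv hKcone hK0
  have hypo_eq : ∀ ω, {xy : (Fin T → Fin d → ℝ) × (Fin n → ℝ) |
        ∃ v : Fin n → ℝ, V ω xy.1 = (v : WithBot (Fin n → ℝ)) ∧ v - xy.2 ∈ K ω} =
      ⋂ k, (fun xy : (Fin T → Fin d → ℝ) × (Fin n → ℝ) => (xy.1, ∑ i, Z k ω i * xy.2 i)) ⁻¹'
        {xb : (Fin T → Fin d → ℝ) × ℝ | (xb.2 : EReal) ≤ scalarize (Z k) V ω xb.1} := by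
    intro ω
    ext ⟨x, y⟩
    simp only [Set.mem_ofPred_eq, Set.mem_iInter, Set.mem_preimage, scalarize]
    induction V ω x using WithBot.recBotCoe with
    | bot => simp
    | coe v =>
      simp only [WithBot.coe_inj, WithBot.recBotCoe_coe, EReal.coe_le_coe_iff, exists_eq_left']
      have hdiff : ∀ z : Fin n → ℝ,
          ∑ i, z i * (v - y) i = ∑ i, z i * v i - ∑ i, z i * y i := fun z => by
        simp [mul_sub, Finset.sum_sub_distrib]
      refine ⟨fun h k => ?_, fun h => hZK ω _ fun k => by rw [hdiff]; exact sub_nonneg.2 (h k)⟩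
      rw [← sub_nonneg, ← hdiff]
      simpa only [mul_comm] using intrinsicInterior_subset (hZri k ω) _ h
  have hcont : ∀ k ω, Continuous fun xy : (Fin T → Fin d → ℝ) × (Fin n → ℝ) =>
      (xy.1, ∑ i, Z k ω i * xy.2 i) := fun k ω => by fun_prop
  have hscalZ := fun k => hscal (Z k) (hZm k) (hZri k)
  refine ⟨fun ω => ?_, ?_⟩
  · rw [hypo_eq]
    exact isClosed_iInter fun k => ((hscalZ k).1 ω).preimage (hcont k ω)
  · simp only [hypo_eq]
    exact MeasCorr.iInter_preimage (fun k => (hscalZ k).2) (fun k => (hscalZ k).1)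
      (fun k e => measurable_const.prodMk (Finset.measurable_sum _ fun i _ =>
        ((measurable_pi_apply i).comp (hZm k)).mul_const _)) hcont

end
end

section
/- Let A : Ω ⇉ ℝ^n be a measurable correspondence with nonempty convex values. Then A admits a measurable selection of its relative interior: there exists an 𝓕-measurable map ρ : Ω → ℝ^n with ρ(ω) ∈ ri A(ω) for every ω. -/
open MeasureTheory Filter Topology

noncomputable section

/-- A point lies in the intrinsic interior as soon as all nearby points of the affine span
lie in the set, and conversely. -/
theorem mem_intrinsicInterior_iff_ball {E : Type*} [NormedAddCommGroup E] [NormedSpace ℝ E]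
    {s : Set E} {x : E} :
    x ∈ intrinsicInterior ℝ s ↔
      x ∈ affineSpan ℝ s ∧ ∃ ε > 0, ∀ y ∈ affineSpan ℝ s, dist y x < ε → y ∈ s := by
  rw [mem_intrinsicInterior]
  constructor
  · rintro ⟨y, hy, rfl⟩
    rw [mem_interior_iff_mem_nhds, Metric.mem_nhds_iff] at hy
    obtain ⟨ε, hε, h⟩ := hy
    exact ⟨y.2, ε, hε, fun z hz hd => h (show (⟨z, hz⟩ : affineSpan ℝ s) ∈ Metric.ball y ε from hd)⟩
  · rintro ⟨hx, ε, hε, h⟩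
    refine ⟨⟨x, hx⟩, ?_, rfl⟩
    rw [mem_interior_iff_mem_nhds, Metric.mem_nhds_iff]
    exact ⟨ε, hε, fun z hz => h z z.2 hz⟩

theorem closure_subset_affineSpan {E : Type*} [NormedAddCommGroup E] [NormedSpace ℝ E]
    [FiniteDimensional ℝ E] (s : Set E) : closure s ⊆ affineSpan ℝ s :=
  closure_minimal (subset_affineSpan ℝ s) (AffineSubspace.closed_of_finiteDimensional _)

/-- Accessibility: a proper convex combination of a relative interior point and a closure point
is a relative interior point. -/
theorem Convex.combo_intrinsicInterior_closure_mem {E : Type*} [NormedAddCommGroup E]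
    [NormedSpace ℝ E] [FiniteDimensional ℝ E] {s : Set E} (hs : Convex ℝ s) {x g : E}
    (hx : x ∈ intrinsicInterior ℝ s) (hg : g ∈ closure s) {t : ℝ} (ht : 0 < t) (ht1 : t ≤ 1) :
    t • x + (1 - t) • g ∈ intrinsicInterior ℝ s := by
  rw [mem_intrinsicInterior_iff_ball] at hx ⊢
  obtain ⟨hxs, ε, hε, h⟩ := hx
  have hgs := closure_subset_affineSpan s hg
  have combo : ∀ {a b : E} (c : ℝ), a ∈ affineSpan ℝ s → b ∈ affineSpan ℝ s →
      c • a + (1 - c) • b ∈ affineSpan ℝ s := by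
    intro a b c ha hb
    have := AffineMap.lineMap_mem c hb ha
    rw [AffineMap.lineMap_apply_module] at this
    rwa [add_comm]
  refine ⟨combo t hxs hgs, t * ε / 2, by positivity, fun y hy hyd => ?_⟩
  obtain ⟨g', hg', hgd⟩ := Metric.mem_closure_iff.1 hg (t * ε / 2) (by positivity)
  have hz := combo t⁻¹ hy (subset_affineSpan ℝ s hg')
  have hyz : y = t • (t⁻¹ • y + (1 - t⁻¹) • g') + (1 - t) • g' := by
    rw [smul_add, smul_smul, smul_smul, mul_inv_cancel₀ ht.ne', mul_sub, mul_inv_cancel₀ ht.ne',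
      one_smul]
    module
  have hzs : t⁻¹ • y + (1 - t⁻¹) • g' ∈ s := by
    apply h _ hz
    set z := t⁻¹ • y + (1 - t⁻¹) • g'
    have key : t • (z - x) = (y - (t • x + (1 - t) • g)) + (1 - t) • (g - g') := by
      rw [hyz]; module
    have h1 : t * dist z x ≤ dist y (t • x + (1 - t) • g) + (1 - t) * dist g g' := by
      have := norm_add_le (y - (t • x + (1 - t) • g)) ((1 - t) • (g - g'))
      rw [← key, norm_smul, norm_smul, Real.norm_of_nonneg ht.le,
        Real.norm_of_nonneg (sub_nonneg.2 ht1)] at this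
      simpa only [dist_eq_norm] using this
    have h2 : (1 - t) * dist g g' ≤ dist g g' :=
      mul_le_of_le_one_left dist_nonneg (by linarith)
    have h3 : t * dist z x < t * ε := by linarith
    exact lt_of_mul_lt_mul_left h3 ht.le
  rw [hyz]
  exact hs hzs hg' ht.le (by linarith) (by ring)

theorem summable_dyadic_smul {E : Type*} [NormedAddCommGroup E] [NormedSpace ℝ E]
    [CompleteSpace E] {h : ℕ → E} {M : ℝ} (hM : ∀ j, ‖h j‖ ≤ M) :
    Summable fun j => (1 / 2 : ℝ) ^ (j + 1) • h j := by
  refine Summable.of_norm_bounded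
    (((summable_nat_add_iff 1).2 summable_geometric_two).mul_right M) fun j => ?_
  rw [norm_smul, Real.norm_of_nonneg (by positivity)]
  exact mul_le_mul_of_nonneg_left (hM j) (by positivity)

/-- A bounded dyadic barycenter of points of a closed convex set lies in the set. -/
theorem Convex.tsum_dyadic_smul_mem {E : Type*} [NormedAddCommGroup E] [NormedSpace ℝ E]
    [CompleteSpace E] {C : Set E} (hC : Convex ℝ C) (hcl : IsClosed C) {h : ℕ → E} {M : ℝ}
    (hM : ∀ j, ‖h j‖ ≤ M) (hh : ∀ j, h j ∈ C) :
    ∑' j, (1 / 2 : ℝ) ^ (j + 1) • h j ∈ C := by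
  have partial_mem : ∀ n : ℕ, ∀ x ∈ C,
      ∑ j ∈ Finset.range n, (1 / 2 : ℝ) ^ (j + 1) • h j + (1 / 2 : ℝ) ^ n • x ∈ C := by
    intro n
    induction n with
    | zero => intro x hx; simpa using hx
    | succ n ih =>
      intro x hx
      have := ih _ (hC (hh n) hx (by norm_num : (0 : ℝ) ≤ 1 / 2)
        (by norm_num : (0 : ℝ) ≤ 1 / 2) (by norm_num))
      convert this using 1
      rw [Finset.sum_range_succ, smul_add, smul_smul, smul_smul, ← pow_succ, add_assoc]
  have lim := (summable_dyadic_smul hM).hasSum.tendsto_sum_nat.add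
    ((tendsto_pow_atTop_nhds_zero_of_lt_one (by norm_num : (0 : ℝ) ≤ 1 / 2)
      (by norm_num)).smul_const (h 0))
  rw [zero_smul, add_zero] at lim
  exact hcl.mem_of_tendsto lim (Eventually.of_forall fun n => partial_mem n _ (hh 0))

/-- A bounded dyadic barycenter of points of the closure of a convex set, at least one of which
is a relative interior point, is a relative interior point. -/
theorem Convex.tsum_dyadic_smul_mem_intrinsicInterior {E : Type*} [NormedAddCommGroup E]
    [NormedSpace ℝ E] [FiniteDimensional ℝ E] {s : Set E} (hs : Convex ℝ s) {M : ℝ} (k : ℕ) :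
    ∀ h : ℕ → E, (∀ j, ‖h j‖ ≤ M) → (∀ j, h j ∈ closure s) → h k ∈ intrinsicInterior ℝ s →
      ∑' j, (1 / 2 : ℝ) ^ (j + 1) • h j ∈ intrinsicInterior ℝ s := by
  have : CompleteSpace E := FiniteDimensional.complete ℝ E
  have peel : ∀ h : ℕ → E, (∀ j, ‖h j‖ ≤ M) → ∑' j, (1 / 2 : ℝ) ^ (j + 1) • h j =
      (1 / 2 : ℝ) • h 0 + (1 / 2 : ℝ) • ∑' j, (1 / 2 : ℝ) ^ (j + 1) • h (j + 1) := by
    intro h hM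
    rw [(summable_dyadic_smul hM).tsum_eq_zero_add,
      ← (summable_dyadic_smul fun j => hM (j + 1)).tsum_const_smul]
    congr 1
    · simp
    · refine tsum_congr fun j => ?_
      rw [smul_smul, ← pow_succ']
  have half : (1 : ℝ) - 1 / 2 = 1 / 2 := by norm_num
  induction k with
  | zero =>
    intro h hM hh hk
    have := hs.combo_intrinsicInterior_closure_mem hk
      (hs.closure.tsum_dyadic_smul_mem isClosed_closure (fun j => hM (j + 1)) fun j => hh (j + 1))
      (by norm_num : (0 : ℝ) < 1 / 2) (by norm_num)
    rwa [half, ← peel h hM] at this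
  | succ k ih =>
    intro h hM hh hk
    have := hs.combo_intrinsicInterior_closure_mem
      (ih (fun j => h (j + 1)) (fun j => hM (j + 1)) (fun j => hh (j + 1)) hk) (hh 0)
      (by norm_num : (0 : ℝ) < 1 / 2) (by norm_num)
    rwa [half, add_comm, ← peel h hM] at this

theorem exists_measurable_index {Ω : Type*} [MeasurableSpace Ω] {p : ℕ → Ω → Prop}
    (hp : ∀ j, MeasurableSet {ω | p j ω}) (hex : ∀ ω, ∃ j, p j ω) :
    ∃ J : Ω → ℕ, Measurable J ∧ ∀ ω, p (J ω) ω := by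
  classical
  refine ⟨fun ω => Nat.find (hex ω), ?_, fun ω => Nat.find_spec (hex ω)⟩
  exact measurable_find hex hp

theorem MeasCorr.measurable_infDist {Ω : Type*} [MeasurableSpace Ω] {E : Type*}
    [PseudoMetricSpace E] {A : Ω → Set E} (hA : MeasCorr A) (hne : ∀ ω, (A ω).Nonempty) (q : E) :
    Measurable fun ω => Metric.infDist q (A ω) := by
  refine measurable_of_Iio fun r => ?_
  convert hA q r using 1
  ext ω
  simp only [Set.mem_preimage, Set.mem_Iio, Metric.infDist_lt_iff (hne ω), Set.mem_ofPred_eq,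
    Set.Nonempty, Set.mem_inter_iff, Metric.mem_ball, dist_comm q]
  exact exists_congr fun y => and_comm

/-- An approximate measurable selection can be refined to a selection of half the error. -/
theorem MeasCorr.exists_refinement {Ω : Type*} [MeasurableSpace Ω] {E : Type*}
    [PseudoMetricSpace E] [SecondCountableTopology E] [Nonempty E] [MeasurableSpace E]
    [BorelSpace E] {A : Ω → Set E} (hA : MeasCorr A) (hne : ∀ ω, (A ω).Nonempty) {ε : ℝ}
    {g : Ω → E} (hg : Measurable g) (hgA : ∀ ω, Metric.infDist (g ω) (A ω) < ε) :
    ∃ g' : Ω → E, Measurable g' ∧ (∀ ω, Metric.infDist (g' ω) (A ω) < ε / 2) ∧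
      ∀ ω, dist (g ω) (g' ω) < ε := by
  obtain ⟨J, hJ, hJp⟩ := exists_measurable_index
    (p := fun j ω => Metric.infDist (TopologicalSpace.denseSeq E j) (A ω) < ε / 2 ∧
      dist (g ω) (TopologicalSpace.denseSeq E j) < ε)
    (fun j => (measurableSet_lt (hA.measurable_infDist hne _) measurable_const).inter
      (measurableSet_lt (hg.dist measurable_const) measurable_const))
    (fun ω => by
      obtain ⟨a, ha, had⟩ := (Metric.infDist_lt_iff (hne ω)).1 (hgA ω)
      have hε : 0 < ε := dist_nonneg.trans_lt had
      obtain ⟨j, hj⟩ := (TopologicalSpace.denseRange_denseSeq E).exists_dist_lt a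
        (lt_min (half_pos hε) (sub_pos.2 had))
      refine ⟨j, (Metric.infDist_le_dist_of_mem ha).trans_lt ?_, ?_⟩
      · rw [dist_comm]; exact hj.trans_le (min_le_left _ _)
      · have := hj.trans_le (min_le_right _ _)
        linarith [dist_triangle (g ω) a (TopologicalSpace.denseSeq E j)])
  exact ⟨fun ω => TopologicalSpace.denseSeq E (J ω), (measurable_from_nat).comp hJ,
    fun ω => (hJp ω).1, fun ω => (hJp ω).2⟩

/-- Near an approximate measurable selection there is a measurable selection of the closure. -/
theorem MeasCorr.exists_selection_near {Ω : Type*} [MeasurableSpace Ω] {E : Type*}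
    [MetricSpace E] [SecondCountableTopology E] [CompleteSpace E] [Nonempty E]
    [MeasurableSpace E] [BorelSpace E] {A : Ω → Set E} (hA : MeasCorr A)
    (hne : ∀ ω, (A ω).Nonempty) {ε : ℝ} {g : Ω → E} (hg : Measurable g)
    (hgA : ∀ ω, Metric.infDist (g ω) (A ω) < ε) :
    ∃ f : Ω → E, Measurable f ∧ (∀ ω, f ω ∈ closure (A ω)) ∧ ∀ ω, dist (g ω) (f ω) ≤ 2 * ε := by
  let S : ℕ → Type _ := fun n =>
    {u : Ω → E // Measurable u ∧ ∀ ω, Metric.infDist (u ω) (A ω) < ε / 2 ^ n}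
  have step : ∀ n (u : S n), ∃ v : S (n + 1), ∀ ω, dist (u.1 ω) (v.1 ω) < ε / 2 ^ n := by
    intro n u
    obtain ⟨v, hv, hvA, hd⟩ := hA.exists_refinement hne u.2.1 u.2.2
    exact ⟨⟨v, hv, fun ω => by rw [pow_succ, ← div_div]; exact hvA ω⟩, hd⟩
  choose next hnext using step
  let u : ∀ n, S n := fun n => Nat.rec ⟨g, hg, by simpa using hgA⟩ next n
  have hu : ∀ ω n, dist ((u n).1 ω) ((u (n + 1)).1 ω) ≤ 2 * ε / 2 / 2 ^ n := fun ω n => by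
    have := (hnext n (u n) ω).le
    rwa [mul_div_cancel_left₀ _ two_ne_zero]
  choose f hf using fun ω => cauchySeq_tendsto_of_complete (cauchySeq_of_le_geometric_two (hu ω))
  refine ⟨f, measurable_of_tendsto_metrizable (fun n => (u n).2.1) (tendsto_pi_nhds.2 hf),
    fun ω => ?_, fun ω => dist_le_of_le_geometric_two_of_tendsto₀ (hu ω) (hf ω)⟩
  rw [Metric.mem_closure_iff_infDist_zero (hne ω)]
  have h1 : Tendsto (fun n => Metric.infDist ((u n).1 ω) (A ω)) atTop
      (𝓝 (Metric.infDist (f ω) (A ω))) :=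
    ((Metric.continuous_infDist_pt (A ω)).tendsto _).comp (hf ω)
  have h2 : Tendsto (fun n : ℕ => ε / 2 ^ n) atTop (𝓝 0) :=
    tendsto_const_nhds.div_atTop (tendsto_pow_atTop_atTop_of_one_lt one_lt_two)
  exact le_antisymm (le_of_tendsto_of_tendsto' h1 h2 fun n => ((u n).2.2 ω).le)
    Metric.infDist_nonneg

/-- Castaing representation: countably many measurable selections of the closure
approximating every point of the correspondence. -/
theorem MeasCorr.exists_castaing_s17 {Ω : Type*} [MeasurableSpace Ω] {E : Type*}
    [MetricSpace E] [SecondCountableTopology E] [CompleteSpace E] [Nonempty E]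
    [MeasurableSpace E] [BorelSpace E] {A : Ω → Set E} (hA : MeasCorr A)
    (hne : ∀ ω, (A ω).Nonempty) :
    ∃ f : ℕ → Ω → E, (∀ k, Measurable (f k)) ∧ (∀ k ω, f k ω ∈ closure (A ω)) ∧
      ∀ ω, ∀ x ∈ A ω, ∀ ε > 0, ∃ k, dist (f k ω) x < ε := by
  have near : ∀ i m : ℕ, ∃ f : Ω → E, Measurable f ∧ (∀ ω, f ω ∈ closure (A ω)) ∧
      ∀ ω, Metric.infDist (TopologicalSpace.denseSeq E i) (A ω) < 1 / ((m : ℝ) + 1) →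
        dist (TopologicalSpace.denseSeq E i) (f ω) ≤ 2 * (1 / ((m : ℝ) + 1)) := by
    intro i m
    have hm : (0 : ℝ) < 1 / ((m : ℝ) + 1) := Nat.one_div_pos_of_nat
    obtain ⟨J, hJ, hJp⟩ := exists_measurable_index
      (p := fun j ω => Metric.infDist (TopologicalSpace.denseSeq E j) (A ω) < 1 / ((m : ℝ) + 1) ∧
        (Metric.infDist (TopologicalSpace.denseSeq E i) (A ω) < 1 / ((m : ℝ) + 1) → j = i))
      (fun j => (measurableSet_lt (hA.measurable_infDist hne _) measurable_const).inter
        ((measurableSet_lt (hA.measurable_infDist hne _) measurable_const).imp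
          (MeasurableSet.const _)))
      (fun ω => by
        by_cases hi : Metric.infDist (TopologicalSpace.denseSeq E i) (A ω) < 1 / ((m : ℝ) + 1)
        · exact ⟨i, hi, fun _ => rfl⟩
        · obtain ⟨a, ha⟩ := hne ω
          obtain ⟨j, hj⟩ :=
            (TopologicalSpace.denseRange_denseSeq E).exists_dist_lt a hm
          rw [dist_comm] at hj
          exact ⟨j, (Metric.infDist_le_dist_of_mem ha).trans_lt hj, fun h => absurd h hi⟩)
    obtain ⟨f, hf, hfA, hfd⟩ := hA.exists_selection_near hne
      (g := fun ω => TopologicalSpace.denseSeq E (J ω)) ((measurable_from_nat).comp hJ)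
      fun ω => (hJp ω).1
    refine ⟨f, hf, hfA, fun ω hω => ?_⟩
    have := hfd ω
    rwa [(hJp ω).2 hω] at this
  choose F hF hFA hFd using near
  refine ⟨fun k => F k.unpair.1 k.unpair.2, fun k => hF _ _, fun k => hFA _ _,
    fun ω x hx ε hε => ?_⟩
  obtain ⟨m, hm⟩ := exists_nat_one_div_lt (show 0 < ε / 3 by positivity)
  obtain ⟨i, hi⟩ := (TopologicalSpace.denseRange_denseSeq E).exists_dist_lt x
    (Nat.one_div_pos_of_nat (α := ℝ) (n := m))
  rw [dist_comm] at hi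
  refine ⟨Nat.pair i m, ?_⟩
  simp only [Nat.unpair_pair]
  have h1 := hFd i m ω ((Metric.infDist_le_dist_of_mem hx).trans_lt hi)
  have h2 := dist_triangle_left (F i m ω) x (TopologicalSpace.denseSeq E i)
  linarith

/-- a measurable correspondence with nonempty convex values admits a
measurable selection of its relative interior. -/
theorem stmt17 {Ω : Type*} {mΩ : MeasurableSpace Ω} (P : Measure Ω) [IsProbabilityMeasure P]
    (n : ℕ) (A : Ω → Set (Fin n → ℝ))
    (hAmeas : MeasCorr A)
    (hAne : ∀ ω, (A ω).Nonempty)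
    (hAconv : ∀ ω, Convex ℝ (A ω)) :
    ∃ ρ : Ω → Fin n → ℝ, Measurable ρ ∧ ∀ ω, ρ ω ∈ intrinsicInterior ℝ (A ω) := by
  obtain ⟨f, hf, hfA, hfd⟩ := hAmeas.exists_castaing_s17 hAne
  let t : ℕ → Ω → ℝ := fun k ω => (1 + ‖f k ω - f 0 ω‖)⁻¹
  have ht0 : ∀ k ω, 0 < t k ω := fun k ω => by positivity
  have ht1 : ∀ k ω, t k ω ≤ 1 := fun k ω =>
    inv_le_one_of_one_le₀ (by linarith [norm_nonneg (f k ω - f 0 ω)])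
  let h : ℕ → Ω → Fin n → ℝ := fun k ω => t k ω • f k ω + (1 - t k ω) • f 0 ω
  have ht : ∀ k, Measurable (t k) := fun k =>
    (measurable_const.add ((hf k).sub (hf 0)).norm).inv
  have hh : ∀ k, Measurable (h k) := fun k =>
    ((ht k).smul (hf k)).add ((measurable_const.sub (ht k)).smul (hf 0))
  have hhA : ∀ k ω, h k ω ∈ closure (A ω) := fun k ω =>
    (hAconv ω).closure (hfA k ω) (hfA 0 ω) (ht0 k ω).le (sub_nonneg.2 (ht1 k ω)) (by ring)
  have hbound : ∀ ω k, ‖h k ω‖ ≤ 1 + ‖f 0 ω‖ := fun ω k => by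
    have e : h k ω = t k ω • (f k ω - f 0 ω) + f 0 ω := by simp only [h]; module
    have hle : ‖t k ω • (f k ω - f 0 ω)‖ ≤ 1 := by
      rw [norm_smul, Real.norm_of_nonneg (ht0 k ω).le]
      exact inv_mul_le_one_of_le₀ (by linarith) (by positivity)
    rw [e]
    exact (norm_add_le _ _).trans (by linarith)
  refine ⟨fun ω => ∑' j, (1 / 2 : ℝ) ^ (j + 1) • h j ω, ?_, fun ω => ?_⟩
  · have hsum : ∀ N, Measurable fun ω =>
        ∑ j ∈ Finset.range N, (1 / 2 : ℝ) ^ (j + 1) • h j ω := fun N =>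
      Finset.measurable_fun_sum _ fun j _ => (hh j).const_smul ((1 / 2 : ℝ) ^ (j + 1))
    exact measurable_of_tendsto_metrizable hsum
      (tendsto_pi_nhds.2 fun ω => (summable_dyadic_smul (hbound ω)).hasSum.tendsto_sum_nat)
  · obtain ⟨x, hx⟩ := (hAne ω).intrinsicInterior (hAconv ω)
    have hxA := intrinsicInterior_subset hx
    obtain ⟨-, ε, hε, hball⟩ := mem_intrinsicInterior_iff_ball.1 hx
    obtain ⟨k, hk⟩ := hfd ω x hxA (ε / 2) (by positivity)
    have hfk : f k ω ∈ intrinsicInterior ℝ (A ω) := by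
      refine mem_intrinsicInterior_iff_ball.2
        ⟨closure_subset_affineSpan _ (hfA k ω), ε / 2, by positivity, fun y hy hyd => ?_⟩
      exact hball y hy (by linarith [dist_triangle y (f k ω) x])
    exact (hAconv ω).tsum_dyadic_smul_mem_intrinsicInterior k (fun j => h j ω) (hbound ω)
      (fun j => hhA j ω)
      ((hAconv ω).combo_intrinsicInterior_closure_mem hfk (hfA 0 ω) (ht0 k ω) (ht1 k ω))

end
end

section
/- Let A : Ω ⇉ ℝ^n be a measurable correspondence with convex values whose interior is nonempty almost surely, and let ρ be a measurable selection of the interior of A (ρ(ω) ∈ int A(ω) a.s.). Then there exists an 𝓕-measurable random variable r : Ω → ℝ with r > 0 a.s. such that the open ball B_{r(ω)}(ρ(ω)) is contained in A(ω) for almost every ω. -/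
open MeasureTheory Filter Topology

noncomputable section

/-- A ball is contained in the closure of a set iff the set meets every small ball around every
point of the ball taken from a fixed dense sequence. -/
theorem ball_subset_closure_iff_denseSeq {E : Type*} [PseudoMetricSpace E]
    [TopologicalSpace.SeparableSpace E] [Nonempty E] {x : E} {δ : ℝ} {s : Set E} :
    Metric.ball x δ ⊆ closure s ↔
      ∀ i m : ℕ, dist (TopologicalSpace.denseSeq E i) x < δ →
        (Metric.ball (TopologicalSpace.denseSeq E i) (1 / ((m : ℝ) + 1)) ∩ s).Nonempty := by
  constructor
  · intro h i m hi
    exact mem_closure_iff.1 (h hi) _ Metric.isOpen_ball (Metric.mem_ball_self (by positivity))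
  · intro h
    have hdense := TopologicalSpace.denseRange_denseSeq E
    refine (hdense.open_subset_closure_inter Metric.isOpen_ball).trans
      (closure_minimal ?_ isClosed_closure)
    rintro _ ⟨hy, i, rfl⟩
    refine Metric.mem_closure_iff.2 fun ε hε => ?_
    obtain ⟨m, hm⟩ := exists_nat_one_div_lt hε
    obtain ⟨z, hz, hzs⟩ := h i m hy
    exact ⟨z, hzs, (Metric.mem_ball'.1 hz).trans hm⟩

/-- For a measurable correspondence `C` and a measurable map `ρ`, the event that a ball of fixed
radius around `ρ` lies in the closure of `C` is measurable. -/
theorem MeasCorr.measurableSet_ball_subset_closure {Ω : Type*} [MeasurableSpace Ω] {E : Type*}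
    [PseudoMetricSpace E] [TopologicalSpace.SeparableSpace E] [MeasurableSpace E]
    [OpensMeasurableSpace E] {C : Ω → Set E} (hC : MeasCorr C) {ρ : Ω → E} (hρ : Measurable ρ)
    (δ : ℝ) : MeasurableSet {ω | Metric.ball (ρ ω) δ ⊆ closure (C ω)} := by
  rcases isEmpty_or_nonempty Ω with _ | ⟨⟨ω₀⟩⟩
  · exact Set.Subsingleton.measurableSet Set.subsingleton_of_subsingleton
  have : Nonempty E := ⟨ρ ω₀⟩
  simp only [ball_subset_closure_iff_denseSeq, Set.ofPred_forall]
  refine MeasurableSet.iInter fun i => MeasurableSet.iInter fun m => ?_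
  refine MeasurableSet.imp ?_ (hC _ _)
  exact hρ (measurableSet_lt (f := fun x => dist (TopologicalSpace.denseSeq E i) x)
    (continuous_const.dist continuous_id).measurable measurable_const)

/-- A ball contained in the closure of a convex set with nonempty interior is contained in the
set itself. -/
theorem Convex.ball_subset_of_ball_subset_closure {E : Type*} [SeminormedAddCommGroup E]
    [NormedSpace ℝ E] {s : Set E} (hs : Convex ℝ s) (hne : (interior s).Nonempty) {x : E} {δ : ℝ}
    (h : Metric.ball x δ ⊆ closure s) : Metric.ball x δ ⊆ s :=
  (interior_maximal h Metric.isOpen_ball).trans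
    ((hs.interior_closure_eq_interior_of_nonempty_interior hne).trans_subset interior_subset)

/-- for a measurable convex-valued correspondence `A` with a.s. nonempty
interior and a measurable selection `ρ` of `int A`, there is a measurable random radius
`r > 0` a.s. with `B_{r(ω)}(ρ(ω)) ⊆ A(ω)` for a.e. `ω`. -/
theorem stmt19 {Ω : Type*} {mΩ : MeasurableSpace Ω} (P : Measure Ω) [IsProbabilityMeasure P]
    (n : ℕ) (A : Ω → Set (Fin n → ℝ))
    (hAmeas : MeasCorr A)
    (hAconv : ∀ ω, Convex ℝ (A ω))
    (hAint : ∀ᵐ ω ∂P, (interior (A ω)).Nonempty)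
    (ρ : Ω → Fin n → ℝ) (hρmeas : Measurable ρ)
    (hρsel : ∀ᵐ ω ∂P, ρ ω ∈ interior (A ω)) :
    ∃ r : Ω → ℝ, Measurable r ∧ (∀ᵐ ω ∂P, 0 < r ω) ∧
      ∀ᵐ ω ∂P, Metric.ball (ρ ω) (r ω) ⊆ A ω := by
  classical
  let S : Ω → ℕ → Prop := fun ω k => Metric.ball (ρ ω) (1 / ((k : ℝ) + 1)) ⊆ closure (A ω)
  have hS : ∀ k, MeasurableSet {ω | S ω k} := fun k =>
    hAmeas.measurableSet_ball_subset_closure hρmeas _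
  have hex : ∀ ω, ∃ k, S ω k ∨ ∀ j, ¬ S ω j := fun ω => by
    by_cases h : ∃ k, S ω k
    · exact h.imp fun _ => Or.inl
    · exact ⟨0, Or.inr (not_exists.1 h)⟩
  have hfind : Measurable fun ω => Nat.find (hex ω) :=
    measurable_find hex fun k => by
      simp only [Set.ofPred_or, Set.ofPred_forall]
      exact (hS k).union (MeasurableSet.iInter fun j => (hS j).compl)
  refine ⟨fun ω => 1 / ((Nat.find (hex ω) : ℝ) + 1),
    (measurable_from_nat (f := fun k : ℕ => 1 / ((k : ℝ) + 1))).comp hfind,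
    Eventually.of_forall fun ω => by positivity, ?_⟩
  filter_upwards [hAint, hρsel] with ω hne hω
  obtain ⟨ε, hε, hball⟩ := Metric.mem_nhds_iff.1 (mem_interior_iff_mem_nhds.1 hω)
  obtain ⟨k, hk⟩ := exists_nat_one_div_lt hε
  have hSk : S ω k := (Metric.ball_subset_ball hk.le).trans (hball.trans subset_closure)
  exact (hAconv ω).ball_subset_of_ball_subset_closure hne
    ((Nat.find_spec (hex ω)).resolve_right fun h => h k hSk)

end
end
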